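/- arXiv:0909.2347 — 2 statements merged into one kernel-verified Lean document; each statement's English description precedes it below -/
import Mathlib

section
/- Let N ≥ 3 and let 0-TL̂_N be the affine nil-Temperley–Lieb algebra: the quotient of the free associative ℂ-algebra on generators u_1, …, u_N by the two-sided ideal generated by u_i², u_iu_{i+1}u_i, u_{i+1}u_iu_{i+1} for all i (indices mod N), and u_iu_j − u_ju_i for all i, j with i − j ≢ ±1 (mod N). For 1 ≤ r ≤ N−1 define e_r = Σ_{I ⊆ {1,…,N}, |I| = r} (product of the u_i, i ∈ I, in any order in which u_i stands to the left of u_j whenever i, j ∈ I and j ≡ i+1 mod N) and h_r = Σ_{I ⊆ {1,…,N}, |I| = r} (product of the u_i, i ∈ I, in any order in which u_j stands to the left of u_i whenever i, j ∈ I and j ≡ i+1 mod N); each summand is a well-defined element since non-adjacent generators commute. Then all the elements e_1,…,e_{N−1}, h_1,…,h_{N−1} pairwise commute in 0-TL̂_N. -/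
noncomputable section

open scoped BigOperators

/-- The generator `u_i` of the free algebra on `u_1, …, u_N` (indices mod `N`). -/
def ugen (N : ℕ) (i : ZMod N) : FreeAlgebra ℂ (ZMod N) := FreeAlgebra.ι ℂ i

/-- The defining relations of the affine nil-Temperley–Lieb algebra `0-TL̂_N`:
`u_i² = 0`, `u_i u_{i+1} u_i = 0`, `u_{i+1} u_i u_{i+1} = 0` for all `i` (mod `N`), and
`u_i u_j = u_j u_i` whenever `i - j ≢ ±1 (mod N)`. -/
inductive TLRel (N : ℕ) : FreeAlgebra ℂ (ZMod N) → FreeAlgebra ℂ (ZMod N) → Prop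
  | sq (i : ZMod N) : TLRel N (ugen N i * ugen N i) 0
  | aba (i : ZMod N) : TLRel N (ugen N i * ugen N (i + 1) * ugen N i) 0
  | bab (i : ZMod N) : TLRel N (ugen N (i + 1) * ugen N i * ugen N (i + 1)) 0
  | comm (i j : ZMod N) (h1 : i - j ≠ 1) (h2 : j - i ≠ 1) :
      TLRel N (ugen N i * ugen N j) (ugen N j * ugen N i)

/-- The affine nil-Temperley–Lieb algebra `0-TL̂_N`. -/
abbrev TLhat (N : ℕ) := RingQuot (TLRel N)

/-- The generator `u_i` as an element of `0-TL̂_N`. -/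
def uTL (N : ℕ) (i : ZMod N) : TLhat N := RingQuot.mkAlgHom ℂ (TLRel N) (ugen N i)

/-- A canonical "gap" of a proper subset `I ⊊ ℤ/Nℤ`: the element of the complement with
the smallest representative. -/
def zgap {N : ℕ} [NeZero N] (I : Finset (ZMod N)) : ZMod N :=
  if h : ((Finset.univ \ I).image ZMod.val).Nonempty then
    ((((Finset.univ \ I).image ZMod.val).min' h : ℕ) : ZMod N)
  else 0

/-- The cyclically ordered product `∏_{i ∈ I} u_i` in which `u_i` stands to the left of
`u_{i+1}` whenever `i, i+1 ∈ I` (cyclically increasing order starting above a gap). -/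
def cycProdAsc {N : ℕ} [NeZero N] {A : Type*} [Monoid A] (u : ZMod N → A)
    (I : Finset (ZMod N)) : A :=
  ((List.range N).map fun t =>
    if zgap I + 1 + (t : ZMod N) ∈ I then u (zgap I + 1 + (t : ZMod N)) else 1).prod

/-- The cyclically ordered product `∏_{i ∈ I} u_i` in which `u_{i+1}` stands to the left of
`u_i` whenever `i, i+1 ∈ I` (cyclically decreasing order starting below a gap). -/
def cycProdDesc {N : ℕ} [NeZero N] {A : Type*} [Monoid A] (u : ZMod N → A)
    (I : Finset (ZMod N)) : A :=
  ((List.range N).map fun t =>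
    if zgap I - 1 - (t : ZMod N) ∈ I then u (zgap I - 1 - (t : ZMod N)) else 1).prod

/-- The cyclic noncommutative elementary symmetric polynomial `e_r ∈ 0-TL̂_N`. -/
def tlE (N : ℕ) [NeZero N] (r : ℕ) : TLhat N :=
  ∑ I ∈ Finset.powersetCard r (Finset.univ : Finset (ZMod N)), cycProdAsc (uTL N) I

/-- The cyclic noncommutative complete symmetric polynomial `h_r ∈ 0-TL̂_N`. -/
def tlH (N : ℕ) [NeZero N] (r : ℕ) : TLhat N :=
  ∑ I ∈ Finset.powersetCard r (Finset.univ : Finset (ZMod N)), cycProdDesc (uTL N) I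

set_option linter.unusedSectionVars false

/-- relations -/
structure NTL (N : ℕ) {A : Type*} [Ring A] (u : ZMod N → A) : Prop where
  sq : ∀ i, u i * u i = 0
  aba : ∀ i, u i * u (i + 1) * u i = 0
  bab : ∀ i, u (i + 1) * u i * u (i + 1) = 0
  comm : ∀ i j, i - j ≠ 1 → j - i ≠ 1 → u i * u j = u j * u i

theorem NTL.neg {N : ℕ} {A : Type*} [Ring A] {u : ZMod N → A} (h : NTL N u) :
    NTL N (fun i => u (-i)) where
  sq i := h.sq _
  aba i := by
    have := h.bab (-(i+1))
    simpa using this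
  bab i := by
    have := h.aba (-(i+1))
    simpa using this
  comm i j h1 h2 := h.comm _ _ (by intro h; apply h2; rw [← h]; ring)
    (by intro h; apply h1; rw [← h]; ring)

/-- product over a range -/
def rprod {A : Type*} [Ring A] (f : ℕ → A) (n : ℕ) : A := ((List.range n).map f).prod

theorem rprod_zero {A : Type*} [Ring A] (f : ℕ → A) : rprod f 0 = 1 := by simp [rprod]

theorem rprod_succ {A : Type*} [Ring A] (f : ℕ → A) (n : ℕ) :
    rprod f (n+1) = rprod f n * f n := by simp [rprod, List.range_succ]

theorem rprod_congr {A : Type*} [Ring A] {f g : ℕ → A} {n : ℕ} (h : ∀ t < n, f t = g t) :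
    rprod f n = rprod g n := by
  induction n with
  | zero => simp [rprod_zero]
  | succ n ih => rw [rprod_succ, rprod_succ, ih (fun t ht => h t (by omega)), h n (by omega)]

theorem rprod_comm {A : Type*} [Ring A] {f : ℕ → A} {a : A} {n : ℕ}
    (h : ∀ t < n, a * f t = f t * a) : a * rprod f n = rprod f n * a := by
  induction n with
  | zero => simp [rprod_zero]
  | succ n ih =>
    rw [rprod_succ, ← mul_assoc, ih (fun t ht => h t (by omega)), mul_assoc, h n (by omega),
      mul_assoc]

theorem rprod_right {A : Type*} [Ring A] {f : ℕ → A} {k n : ℕ} (hk : k < n)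
    (h : ∀ t, k < t → t < n → f k * f t = f t * f k) :
    rprod f n = rprod (Function.update f k 1) n * f k := by
  induction n with
  | zero => omega
  | succ n ih =>
    rw [rprod_succ, rprod_succ]
    rcases Nat.lt_or_ge k n with h1 | h1
    · rw [ih h1 (fun t ht ht' => h t ht (by omega)), Function.update_of_ne (by omega),
        mul_assoc, mul_assoc, h n h1 (by omega)]
    · obtain rfl : k = n := by omega
      rw [Function.update_self, mul_one]
      congr 1
      exact rprod_congr fun t ht => by rw [Function.update_of_ne (by omega)]

theorem rprod_left {A : Type*} [Ring A] {f : ℕ → A} {k n : ℕ} (hk : k < n)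
    (h : ∀ t, t < k → f k * f t = f t * f k) :
    rprod f n = f k * rprod (Function.update f k 1) n := by
  induction n with
  | zero => omega
  | succ n ih =>
    rw [rprod_succ, rprod_succ]
    rcases Nat.lt_or_ge k n with h1 | h1
    · rw [ih h1, Function.update_of_ne (by omega), mul_assoc]
    · obtain rfl : k = n := by omega
      rw [Function.update_self, mul_one, ← rprod_comm h]
      congr 1
      exact rprod_congr fun t ht => by rw [Function.update_of_ne (by omega)]

theorem rprod_right_zero {A : Type*} [Ring A] {f : ℕ → A} {a : A} {k n : ℕ} (hk : k + 1 < n)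
    (h0 : f k * f (k+1) * a = 0)
    (h : ∀ t, k + 1 < t → t < n → a * f t = f t * a) :
    rprod f n * a = 0 := by
  induction n with
  | zero => omega
  | succ n ih =>
    rcases Nat.lt_or_ge (k+1) n with h1 | h1
    · rw [rprod_succ, mul_assoc, ← h n h1 (by omega), ← mul_assoc,
        ih h1 (fun t ht ht' => h t ht (by omega)), zero_mul]
    · obtain rfl : n = k + 1 := by omega
      rw [rprod_succ, rprod_succ, mul_assoc, mul_assoc, ← mul_assoc (f k), h0, mul_zero]

theorem rprod_left_zero {A : Type*} [Ring A] {f : ℕ → A} {a : A} {k n : ℕ} (hk : k + 1 < n)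
    (h0 : a * f k * f (k+1) = 0)
    (h : ∀ t, t < k → a * f t = f t * a) :
    a * rprod f n = 0 := by
  induction n with
  | zero => omega
  | succ n ih =>
    rcases Nat.lt_or_ge (k+1) n with h1 | h1
    · rw [rprod_succ, ← mul_assoc, ih h1, zero_mul]
    · obtain rfl : n = k + 1 := by omega
      rw [rprod_succ, rprod_succ, ← mul_assoc, ← mul_assoc, rprod_comm h, mul_assoc, mul_assoc,
        ← mul_assoc a, h0, mul_zero]

/-- product from gap g -/
def gprod {N : ℕ} {A : Type*} [Ring A] (u : ZMod N → A) (g : ZMod N) (I : Finset (ZMod N)) : A :=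
  rprod (fun t => if g + 1 + (t : ZMod N) ∈ I then u (g + 1 + (t : ZMod N)) else 1) N

theorem zcast_eq {N : ℕ} [NeZero N] {a b : ℕ} (g : ZMod N) (ha : a < N) (hb : b < N)
    (h : g + 1 + (a : ZMod N) = g + 1 + (b : ZMod N)) : a = b := by
  have := add_left_cancel h
  rw [ZMod.natCast_eq_natCast_iff] at this
  exact Nat.ModEq.eq_of_lt_of_lt this ha hb

theorem zexists {N : ℕ} [NeZero N] (g i : ZMod N) : ∃ k < N, i = g + 1 + (k : ZMod N) :=
  ⟨(i - g - 1).val, ZMod.val_lt _, by simp⟩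

theorem zlast {N : ℕ} [NeZero N] (g : ZMod N) : g + 1 + ((N - 1 : ℕ) : ZMod N) = g := by
  have : 1 ≤ N := NeZero.one_le
  push_cast [this]; simp

/-- in range k<t<N, membership excludes t = N-1; adjacency forces t = k+1 -/
theorem zcomm {N : ℕ} [NeZero N] {A : Type*} [Ring A] {u : ZMod N → A} (hu : NTL N u)
    {g : ZMod N} {I : Finset (ZMod N)} (hg : g ∉ I) {k t : ℕ} (hkt : k < t) (ht : t < N)
    (h : t = k + 1 → g + 1 + (t : ZMod N) ∉ I ∨ g + 1 + (k : ZMod N) ∉ I) :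
    let f := fun t : ℕ => if g + 1 + (t : ZMod N) ∈ I then u (g + 1 + (t : ZMod N)) else 1
    f k * f t = f t * f k := by
  intro f
  simp only [f]
  by_cases h1 : g + 1 + (t : ZMod N) ∈ I
  · by_cases h2 : g + 1 + (k : ZMod N) ∈ I
    · rw [if_pos h1, if_pos h2]
      apply hu.comm
      · intro h3
        have h4 : g + 1 + (k : ZMod N) = g + 1 + ((t + 1 : ℕ) : ZMod N) := by
          push_cast; linear_combination h3
        have h5 : t ≠ N - 1 := by
          rintro rfl
          rw [zlast] at h1; exact hg h1
        have := zcast_eq g (by omega) (by omega) h4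
        omega
      · intro h3
        have h4 : g + 1 + (t : ZMod N) = g + 1 + ((k + 1 : ℕ) : ZMod N) := by
          push_cast; linear_combination h3
        have := zcast_eq g (by omega) (by omega) h4
        have := h this
        tauto
    · simp [h2]
  · simp [h1]

theorem gupdate {N : ℕ} [NeZero N] {A : Type*} [Ring A] (u : ZMod N → A)
    (g : ZMod N) (I : Finset (ZMod N)) {k : ℕ} (hk : k < N) :
    rprod (Function.update (fun t : ℕ => if g + 1 + (t : ZMod N) ∈ I then
      u (g + 1 + (t : ZMod N)) else 1) k 1) N = gprod u g (I.erase (g + 1 + (k : ZMod N))) := by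
  apply rprod_congr
  intro t ht
  by_cases h : t = k
  · subst h; simp
  · rw [Function.update_of_ne h]
    have : g + 1 + (t : ZMod N) ≠ g + 1 + (k : ZMod N) := fun h' => h (zcast_eq g ht hk h')
    simp only [Finset.mem_erase, ne_eq, this, not_false_eq_true, true_and]

section
variable {N : ℕ} [NeZero N] {A : Type*} [Ring A] {u : ZMod N → A}

theorem gprod_right (hu : NTL N u) {g : ZMod N} {I : Finset (ZMod N)} (hg : g ∉ I)
    {i : ZMod N} (hi : i ∈ I) (hi1 : i + 1 ∉ I) :
    gprod u g I = gprod u g (I.erase i) * u i := by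
  obtain ⟨k, hk, rfl⟩ := zexists g i
  rw [gprod, rprod_right hk, gupdate u g I hk, if_pos hi]
  intro t ht ht'
  apply zcomm hu hg ht ht'
  rintro rfl
  left
  push_cast
  rwa [← add_assoc]

theorem gprod_left (hu : NTL N u) {g : ZMod N} {I : Finset (ZMod N)} (hg : g ∉ I)
    {i : ZMod N} (hi : i ∈ I) (hi1 : i - 1 ∉ I) :
    gprod u g I = u i * gprod u g (I.erase i) := by
  obtain ⟨k, hk, rfl⟩ := zexists g i
  rw [gprod, rprod_left hk, gupdate u g I hk, if_pos hi]
  intro t ht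
  refine (zcomm hu hg ht hk ?_).symm
  rintro rfl
  right
  have e : g + 1 + ((t + 1 : ℕ) : ZMod N) - 1 = g + 1 + (t : ZMod N) := by push_cast; ring
  rwa [e] at hi1

theorem gprod_right_zero (hu : NTL N u) {g : ZMod N} {I : Finset (ZMod N)} (hg : g ∉ I)
    {i : ZMod N} (hi : i ∈ I) : gprod u g I * u i = 0 := by
  by_cases hi1 : i + 1 ∈ I
  · obtain ⟨k, hk, rfl⟩ := zexists g i
    have hk' : k + 1 < N := by
      by_contra h
      obtain rfl : k = N - 1 := by omega
      rw [zlast] at hi; exact hg hi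
    have e : g + 1 + ((k + 1 : ℕ) : ZMod N) = g + 1 + (k : ZMod N) + 1 := by push_cast; ring
    apply rprod_right_zero hk'
    · rw [if_pos hi, e, if_pos hi1, hu.aba]
    · intro t ht ht'
      have := zcomm hu hg (k := k) (t := t) (by omega) ht' (by omega)
      simpa only [if_pos hi] using this
  · rw [gprod_right hu hg hi hi1, mul_assoc, hu.sq, mul_zero]

theorem gprod_left_zero (hu : NTL N u) {g : ZMod N} {I : Finset (ZMod N)} (hg : g ∉ I)
    {i : ZMod N} (hi : i ∈ I) : u i * gprod u g I = 0 := by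
  by_cases hi1 : i - 1 ∈ I
  · obtain ⟨k, hk, hik⟩ := zexists g (i - 1)
    obtain rfl : i = g + 1 + (k : ZMod N) + 1 := by rw [← hik]; ring
    rw [hik] at hi1
    have hk' : k + 1 < N := by
      by_contra h
      obtain rfl : k = N - 1 := by omega
      rw [zlast] at hi1; exact hg hi1
    have e : g + 1 + ((k + 1 : ℕ) : ZMod N) = g + 1 + (k : ZMod N) + 1 := by push_cast; ring
    apply rprod_left_zero hk'
    · rw [if_pos hi1, e, if_pos hi, hu.bab]
    · intro t ht
      have := zcomm hu hg (k := t) (t := k+1) (by omega) hk' (by omega)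
      simpa only [e, if_pos hi] using this.symm
  · rw [gprod_left hu hg hi hi1, ← mul_assoc, hu.sq, zero_mul]

theorem gprod_empty (u : ZMod N → A) (g : ZMod N) : gprod u g ∅ = 1 := by
  rw [gprod]
  have : ∀ n, rprod (fun _ : ℕ => (1 : A)) n = 1 := by intro n; simp [rprod]
  simpa using this N

theorem zclosed {I : Finset (ZMod N)} (h : ∀ i ∈ I, i + 1 ∈ I) (hne : I.Nonempty) (j : ZMod N) :
    j ∈ I := by
  obtain ⟨i, hi⟩ := hne
  have : ∀ n : ℕ, i + n ∈ I := by
    intro n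
    induction n with
    | zero => simpa using hi
    | succ n ih => push_cast; rw [← add_assoc]; exact h _ ih
  have := this (j - i).val
  simpa using this

theorem zclosed' {I : Finset (ZMod N)} (h : ∀ i ∈ I, i - 1 ∈ I) (hne : I.Nonempty) (j : ZMod N) :
    j ∈ I := by
  obtain ⟨i, hi⟩ := hne
  have : ∀ n : ℕ, i - n ∈ I := by
    intro n
    induction n with
    | zero => simpa using hi
    | succ n ih =>
      have := h _ ih
      push_cast
      rwa [sub_sub] at this
  have := this (i - j).val
  simpa using this

theorem gprod_indep (hu : NTL N u) {g g' : ZMod N} {I : Finset (ZMod N)} (hg : g ∉ I)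
    (hg' : g' ∉ I) : gprod u g I = gprod u g' I := by
  induction I using Finset.strongInduction with
  | H I ih =>
    rcases I.eq_empty_or_nonempty with rfl | hne
    · rw [gprod_empty, gprod_empty]
    · obtain ⟨i, hi, hi1⟩ : ∃ i ∈ I, i + 1 ∉ I := by
        by_contra! h
        exact hg (zclosed h hne g)
      rw [gprod_right hu hg hi hi1, gprod_right hu hg' hi hi1,
        ih _ (Finset.erase_ssubset hi) (by simp [hg]) (by simp [hg'])]

end

/-- characterisation of ascending products -/
structure AscP (N : ℕ) [NeZero N] {A : Type*} [Ring A] (u : ZMod N → A) (P : Finset (ZMod N) → A) :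
    Prop where
  empty : P ∅ = 1
  right : ∀ I, I ≠ Finset.univ → ∀ i ∈ I, i + 1 ∉ I → P I = P (I.erase i) * u i
  left : ∀ I, I ≠ Finset.univ → ∀ i ∈ I, i - 1 ∉ I → P I = u i * P (I.erase i)
  rz : ∀ I, I ≠ Finset.univ → ∀ i ∈ I, P I * u i = 0
  lz : ∀ I, I ≠ Finset.univ → ∀ i ∈ I, u i * P I = 0

section
variable {N : ℕ} [NeZero N] {A : Type*} [Ring A] {u : ZMod N → A}

theorem zgap_notMem {I : Finset (ZMod N)} (hI : I ≠ Finset.univ) : zgap I ∉ I := by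
  have h : ((Finset.univ \ I).image ZMod.val).Nonempty := by
    simp only [Finset.image_nonempty, Finset.sdiff_nonempty]
    intro h
    exact hI (Finset.univ_subset_iff.1 h)
  rw [zgap, dif_pos h]
  have := Finset.min'_mem _ h
  rw [Finset.mem_image] at this
  obtain ⟨x, hx, hx'⟩ := this
  rw [← hx', ZMod.natCast_zmod_val]
  simpa using hx

theorem range_coe (n : ℕ) :
    (do let a ← List.range n; pure (a : ZMod N) : List (ZMod N)) =
      (List.range n).map (fun a : ℕ => (a : ZMod N)) := by
  induction n with
  | zero => rfl
  | succ n ih =>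
    simp only [List.range_succ, List.map_append, ← ih]
    simp

theorem cycProdAsc_eq (u : ZMod N → A) (I : Finset (ZMod N)) :
    cycProdAsc u I = gprod u (zgap I) I := by
  rw [cycProdAsc, gprod, rprod, range_coe, List.map_map]
  rfl

theorem ascP_of_gprod (hu : NTL N u) {P : Finset (ZMod N) → A}
    (hP : ∀ I, I ≠ Finset.univ → ∃ g, g ∉ I ∧ P I = gprod u g I) : AscP N u P where
  empty := by
    obtain ⟨g, hg, h⟩ := hP ∅ (by
      intro h
      have := Finset.mem_univ (0 : ZMod N)
      rw [← h] at this; simp at this)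
    rw [h, gprod_empty]
  right I hI i hi hi1 := by
    obtain ⟨g, hg, h⟩ := hP I hI
    have hne : I.erase i ≠ Finset.univ := fun h => by
      have := Finset.mem_univ i
      rw [← h] at this; simp at this
    obtain ⟨g', hg', h'⟩ := hP _ hne
    rw [h, h', gprod_right hu hg hi hi1, gprod_indep hu hg' (g' := g) (by simp [hg])]
  left I hI i hi hi1 := by
    obtain ⟨g, hg, h⟩ := hP I hI
    have hne : I.erase i ≠ Finset.univ := fun h => by
      have := Finset.mem_univ i
      rw [← h] at this; simp at this
    obtain ⟨g', hg', h'⟩ := hP _ hne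
    rw [h, h', gprod_left hu hg hi hi1, gprod_indep hu hg' (g' := g) (by simp [hg])]
  rz I hI i hi := by
    obtain ⟨g, hg, h⟩ := hP I hI
    rw [h, gprod_right_zero hu hg hi]
  lz I hI i hi := by
    obtain ⟨g, hg, h⟩ := hP I hI
    rw [h, gprod_left_zero hu hg hi]

theorem ascP_cyc (hu : NTL N u) : AscP N u (cycProdAsc u) :=
  ascP_of_gprod hu fun I hI => ⟨zgap I, zgap_notMem hI, cycProdAsc_eq u I⟩

/-- negation of index sets -/
def negF (I : Finset (ZMod N)) : Finset (ZMod N) := I.map (Equiv.neg (ZMod N)).toEmbedding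

theorem mem_negF {I : Finset (ZMod N)} {x : ZMod N} : x ∈ negF I ↔ -x ∈ I := by
  simp only [negF, Finset.mem_map_equiv]; rfl

theorem negF_negF (I : Finset (ZMod N)) : negF (negF I) = I := by
  ext x; simp [mem_negF]

theorem card_negF (I : Finset (ZMod N)) : (negF I).card = I.card := by simp [negF]

theorem negF_univ_iff {I : Finset (ZMod N)} : negF I ≠ Finset.univ ↔ I ≠ Finset.univ := by
  have : negF (Finset.univ : Finset (ZMod N)) = Finset.univ := by ext; simp [mem_negF]
  constructor
  · rintro h rfl; exact h this
  · intro h h'; apply h; rw [← negF_negF I, h', this]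

theorem negF_erase (I : Finset (ZMod N)) (i : ZMod N) : negF (I.erase i) = (negF I).erase (-i) := by
  ext x; simp [mem_negF, neg_eq_iff_eq_neg]

theorem descP_cyc (hu : NTL N u) :
    AscP N (fun i => u (-i)) (fun I => cycProdDesc u (negF I)) := by
  apply ascP_of_gprod hu.neg
  intro I hI
  refine ⟨-zgap (negF I), ?_, ?_⟩
  · have := zgap_notMem (negF_univ_iff.2 hI)
    rwa [mem_negF] at this
  · rw [cycProdDesc, gprod, rprod, range_coe, List.map_map]
    congr 1
    apply List.map_congr_left
    intro t ht
    have e : -(zgap (negF I)) + 1 + (t : ZMod N) = -(zgap (negF I) - 1 - (t : ZMod N)) := by ring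
    simp only [Function.comp_apply, e, neg_neg, mem_negF]

end

/-- characterisation of descending products -/
structure DescP (N : ℕ) [NeZero N] {A : Type*} [Ring A] (u : ZMod N → A)
    (P : Finset (ZMod N) → A) : Prop where
  empty : P ∅ = 1
  right : ∀ I, I ≠ Finset.univ → ∀ i ∈ I, i - 1 ∉ I → P I = P (I.erase i) * u i
  left : ∀ I, I ≠ Finset.univ → ∀ i ∈ I, i + 1 ∉ I → P I = u i * P (I.erase i)
  rz : ∀ I, I ≠ Finset.univ → ∀ i ∈ I, P I * u i = 0
  lz : ∀ I, I ≠ Finset.univ → ∀ i ∈ I, u i * P I = 0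

section
variable {N : ℕ} [NeZero N] {A : Type*} [Ring A] {u : ZMod N → A} {P Q : Finset (ZMod N) → A}

theorem descP_of (hu : AscP N (fun i => u (-i)) (fun I => Q (negF I))) : DescP N u Q where
  empty := hu.empty
  right I hI i hi hi1 := by
    have := hu.right (negF I) (negF_univ_iff.2 hI) (-i) (by simpa [mem_negF] using hi)
      (by
        have e : -(-i + 1) = i - 1 := by ring
        rw [mem_negF, e]; exact hi1)
    simpa [negF_negF, negF_erase] using this
  left I hI i hi hi1 := by
    have := hu.left (negF I) (negF_univ_iff.2 hI) (-i) (by simpa [mem_negF] using hi)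
      (by
        have e : -(-i - 1) = i + 1 := by ring
        rw [mem_negF, e]; exact hi1)
    simpa [negF_negF, negF_erase] using this
  rz I hI i hi := by
    have := hu.rz (negF I) (negF_univ_iff.2 hI) (-i) (by simpa [mem_negF] using hi)
    simpa [negF_negF] using this
  lz I hI i hi := by
    have := hu.lz (negF I) (negF_univ_iff.2 hI) (-i) (by simpa [mem_negF] using hi)
    simpa [negF_negF] using this

theorem ne_univ_of_notMem {I : Finset (ZMod N)} {i : ZMod N} (h : i ∉ I) : I ≠ Finset.univ := by
  rintro rfl; simp at h

theorem ne_univ_mono {I J : Finset (ZMod N)} (h : I ⊆ J) (hJ : J ≠ Finset.univ) :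
    I ≠ Finset.univ := by
  rintro rfl; exact hJ (Finset.univ_subset_iff.1 h)

theorem exists_top {I : Finset (ZMod N)} (hI : I ≠ Finset.univ) (hne : I.Nonempty) :
    ∃ i ∈ I, i + 1 ∉ I := by
  by_contra! h
  exact hI (Finset.eq_univ_iff_forall.2 (zclosed h hne))

theorem exists_bot {I : Finset (ZMod N)} (hI : I ≠ Finset.univ) (hne : I.Nonempty) :
    ∃ i ∈ I, i - 1 ∉ I := by
  by_contra! h
  exact hI (Finset.eq_univ_iff_forall.2 (zclosed' h hne))

theorem AscP.union (hP : AscP N u P) {X Y : Finset (ZMod N)} (hd : Disjoint X Y)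
    (hU : X ∪ Y ≠ Finset.univ) (h : ∀ y ∈ Y, y + 1 ∉ X) : P (X ∪ Y) = P X * P Y := by
  induction Y using Finset.strongInduction with
  | H Y ih =>
    rcases Y.eq_empty_or_nonempty with rfl | hne
    · simp [hP.empty]
    · have hY := ne_univ_mono Finset.subset_union_right hU
      obtain ⟨y, hy, hy1⟩ := exists_top hY hne
      have hyX : y ∉ X := fun h' => (Finset.disjoint_left.1 hd h') hy
      have e : (X ∪ Y).erase y = X ∪ Y.erase y := by
        rw [Finset.erase_union_distrib, Finset.erase_eq_of_notMem hyX]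
      rw [hP.right _ hU y (by simp [hy]) (by simp [hy1, h y hy]), e,
        hP.right _ hY y hy hy1, ih _ (Finset.erase_ssubset hy), mul_assoc]
      · exact hd.mono_right (Finset.erase_subset _ _)
      · rw [← e]; exact ne_univ_mono (Finset.erase_subset _ _) hU
      · intro z hz; exact h z (Finset.mem_of_mem_erase hz)

theorem DescP.union (hP : DescP N u P) {X Y : Finset (ZMod N)} (hd : Disjoint X Y)
    (hU : X ∪ Y ≠ Finset.univ) (h : ∀ x ∈ X, x + 1 ∉ Y) : P (X ∪ Y) = P X * P Y := by
  induction Y using Finset.strongInduction with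
  | H Y ih =>
    rcases Y.eq_empty_or_nonempty with rfl | hne
    · simp [hP.empty]
    · have hY := ne_univ_mono Finset.subset_union_right hU
      obtain ⟨y, hy, hy1⟩ := exists_bot hY hne
      have hyX : y ∉ X := fun h' => (Finset.disjoint_left.1 hd h') hy
      have e : (X ∪ Y).erase y = X ∪ Y.erase y := by
        rw [Finset.erase_union_distrib, Finset.erase_eq_of_notMem hyX]
      have hy2 : y - 1 ∉ X := fun h' => h _ h' (by simpa using hy)
      rw [hP.right _ hU y (by simp [hy]) (by simp [hy1, hy2]), e,
        hP.right _ hY y hy hy1, ih _ (Finset.erase_ssubset hy), mul_assoc]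
      · exact hd.mono_right (Finset.erase_subset _ _)
      · rw [← e]; exact ne_univ_mono (Finset.erase_subset _ _) hU
      · intro z hz hz'; exact h z hz (Finset.mem_of_mem_erase hz')

theorem AscP.commute (hP : AscP N u P) {a : A} {X : Finset (ZMod N)} (hX : X ≠ Finset.univ)
    (h : ∀ x ∈ X, a * u x = u x * a) : a * P X = P X * a := by
  induction X using Finset.strongInduction with
  | H X ih =>
    rcases X.eq_empty_or_nonempty with rfl | hne
    · simp [hP.empty]
    · obtain ⟨y, hy, hy1⟩ := exists_top hX hne
      rw [hP.right _ hX y hy hy1, ← mul_assoc, ih _ (Finset.erase_ssubset hy)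
        (ne_univ_mono (Finset.erase_subset _ _) hX)
        (fun x hx => h x (Finset.mem_of_mem_erase hx)), mul_assoc, h y hy, mul_assoc]

theorem DescP.commute (hP : DescP N u P) {a : A} {X : Finset (ZMod N)} (hX : X ≠ Finset.univ)
    (h : ∀ x ∈ X, a * u x = u x * a) : a * P X = P X * a := by
  induction X using Finset.strongInduction with
  | H X ih =>
    rcases X.eq_empty_or_nonempty with rfl | hne
    · simp [hP.empty]
    · obtain ⟨y, hy, hy1⟩ := exists_bot hX hne
      rw [hP.right _ hX y hy hy1, ← mul_assoc, ih _ (Finset.erase_ssubset hy)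
        (ne_univ_mono (Finset.erase_subset _ _) hX)
        (fun x hx => h x (Finset.mem_of_mem_erase hx)), mul_assoc, h y hy, mul_assoc]

theorem asc_eq_desc (hP : AscP N u P) (hQ : DescP N u Q) {X : Finset (ZMod N)}
    (hX : X ≠ Finset.univ) (h : ∀ x ∈ X, x + 1 ∉ X) : P X = Q X := by
  induction X using Finset.strongInduction with
  | H X ih =>
    rcases X.eq_empty_or_nonempty with rfl | ⟨y, hy⟩
    · simp [hP.empty, hQ.empty]
    · rw [hP.right _ hX y hy (h y hy), hQ.right _ hX y hy (fun h' => h _ h' (by simpa using hy)),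
        ih _ (Finset.erase_ssubset hy) (ne_univ_mono (Finset.erase_subset _ _) hX)]
      intro x hx hx'
      exact h x (Finset.mem_of_mem_erase hx) (Finset.mem_of_mem_erase hx')

/-! mixed case -/

theorem PQ_zero (hP : AscP N u P) (hQ : DescP N u Q) {I J : Finset (ZMod N)}
    (hI : I ≠ Finset.univ) (hJ : J ≠ Finset.univ) (h : ¬ Disjoint I J) : P I * Q J = 0 := by
  have hne : (I ∩ J).Nonempty := by
    rwa [Finset.nonempty_iff_ne_empty, ne_eq, ← Finset.disjoint_iff_inter_eq_empty]
  obtain ⟨i, hi, hi1⟩ := exists_top (ne_univ_mono Finset.inter_subset_left hI) hne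
  rw [Finset.mem_inter] at hi
  by_cases h1 : i + 1 ∈ I
  · have h2 : i + 1 ∉ J := fun h2 => hi1 (Finset.mem_inter.2 ⟨h1, h2⟩)
    rw [hQ.left _ hJ i hi.2 h2, ← mul_assoc, hP.rz _ hI i hi.1, zero_mul]
  · rw [hP.right _ hI i hi.1 h1, mul_assoc, hQ.lz _ hJ i hi.2, mul_zero]

theorem QP_zero (hP : AscP N u P) (hQ : DescP N u Q) {I J : Finset (ZMod N)}
    (hI : I ≠ Finset.univ) (hJ : J ≠ Finset.univ) (h : ¬ Disjoint I J) : Q J * P I = 0 := by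
  have hne : (I ∩ J).Nonempty := by
    rwa [Finset.nonempty_iff_ne_empty, ne_eq, ← Finset.disjoint_iff_inter_eq_empty]
  obtain ⟨i, hi, hi1⟩ := exists_bot (ne_univ_mono Finset.inter_subset_left hI) hne
  rw [Finset.mem_inter] at hi
  by_cases h1 : i - 1 ∈ I
  · have h2 : i - 1 ∉ J := fun h2 => hi1 (Finset.mem_inter.2 ⟨h1, h2⟩)
    rw [hQ.right _ hJ i hi.2 h2, mul_assoc, hP.lz _ hI i hi.1, mul_zero]
  · rw [hP.left _ hI i hi.1 h1, ← mul_assoc, hQ.rz _ hJ i hi.2, zero_mul]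

/-- the non-bottoms of S whose letter is in I -/
def nb (S I : Finset (ZMod N)) : Finset (ZMod N) := I.filter fun x => x - 1 ∈ S

theorem QP_canon (hP : AscP N u P) (hQ : DescP N u Q) {I J : Finset (ZMod N)}
    (hI : I ≠ Finset.univ) (hJ : J ≠ Finset.univ) (hd : Disjoint I J) :
    Q J * P I = Q ((I ∪ J) \ nb (I ∪ J) I) * P (nb (I ∪ J) I) := by
  set S := I ∪ J with hS
  set B := I.filter fun x => x - 1 ∉ S with hB
  have hIB : I = B ∪ nb S I := by
    ext x; simp only [hB, nb, Finset.mem_union, Finset.mem_filter]; tauto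
  have hIJ : ∀ x ∈ I, x ∉ J := fun x hx => Finset.disjoint_left.1 hd hx
  have hBI : B ⊆ I := Finset.filter_subset _ _
  have hBn : B ≠ Finset.univ := ne_univ_mono hBI hI
  have h1 : P I = P B * P (nb S I) := by
    conv_lhs => rw [hIB]
    apply hP.union
    · rw [Finset.disjoint_left]; intro x hx hx'
      simp only [hB, nb, Finset.mem_filter] at hx hx'; tauto
    · rwa [← hIB]
    · intro y hy hy'
      simp only [hB, nb, Finset.mem_filter, add_sub_cancel_right] at hy hy'
      exact hy'.2 (by simp [hS, hy.1])
  have h2 : P B = Q B := by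
    apply asc_eq_desc hP hQ hBn
    intro x hx hx'
    simp only [hB, Finset.mem_filter, add_sub_cancel_right] at hx hx'
    exact hx'.2 (by simp [hS, hx.1])
  have h3 : Q (J ∪ B) = Q J * Q B := by
    apply hQ.union
    · exact (hd.mono_left hBI).symm
    · intro h
      have hSu : S = Finset.univ := Finset.univ_subset_iff.1 (by
        rw [← h, hS, Finset.union_comm]; exact Finset.union_subset_union_left hBI)
      have : B = ∅ := by
        rw [hB, hSu]; simp
      rw [this] at h; simp at h; exact hJ h
    · intro x hx hx'
      simp only [hB, Finset.mem_filter, add_sub_cancel_right] at hx'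
      exact hx'.2 (by simp [hS, hx])
  have h4 : S \ nb S I = J ∪ B := by
    ext x
    have := hIJ x
    simp only [hS, hB, nb, Finset.mem_union, Finset.mem_filter, Finset.mem_sdiff]; tauto
  rw [h1, h2, h4, h3, mul_assoc]

theorem PQ_eq (hu : NTL N u) (hP : AscP N u P) (hQ : DescP N u Q) {I J : Finset (ZMod N)}
    (hI : I ≠ Finset.univ) (hJ : J ≠ Finset.univ) (hd : Disjoint I J) :
    ∃ I' J', I' ≠ Finset.univ ∧ J' ≠ Finset.univ ∧ Disjoint I' J' ∧ I' ∪ J' = I ∪ J ∧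
      (∀ x ∈ I ∪ J, x - 1 ∈ I ∪ J → (x ∈ I' ↔ x - 1 ∈ I)) ∧ P I * Q J = Q J' * P I' := by
  have hIJ : ∀ x, x ∈ I → x ∈ J → False := fun x hx => Finset.disjoint_left.1 hd hx
  let I0 := I.filter fun x => x - 1 ∈ I
  let I1 := I.filter fun x => x - 1 ∉ I
  let J0 := J.filter fun x => x - 1 ∈ J
  let J1 := J.filter fun x => x - 1 ∉ J
  have m1 : ∀ x, x ∈ I0 ↔ x ∈ I ∧ x - 1 ∈ I := fun x => by simp [I0]
  have m2 : ∀ x, x ∈ I1 ↔ x ∈ I ∧ x - 1 ∉ I := fun x => by simp [I1]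
  have m3 : ∀ x, x ∈ J0 ↔ x ∈ J ∧ x - 1 ∈ J := fun x => by simp [J0]
  have m4 : ∀ x, x ∈ J1 ↔ x ∈ J ∧ x - 1 ∉ J := fun x => by simp [J1]
  have sI0 : I0 ⊆ I := Finset.filter_subset _ _
  have sI1 : I1 ⊆ I := Finset.filter_subset _ _
  have sJ0 : J0 ⊆ J := Finset.filter_subset _ _
  have sJ1 : J1 ⊆ J := Finset.filter_subset _ _
  have eI : I = I1 ∪ I0 := by ext x; simp only [Finset.mem_union, m1, m2]; tauto
  have eJ : J = J0 ∪ J1 := by ext x; simp only [Finset.mem_union, m3, m4]; tauto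
  have hI' : I0 ∪ J1 ≠ Finset.univ := by
    intro h
    have h' : ∀ x, x ∈ I0 ∨ x ∈ J1 := fun x => by
      rw [← Finset.mem_union, h]; exact Finset.mem_univ x
    apply hI
    rw [Finset.eq_univ_iff_forall]
    intro x
    rcases h' x with h1 | h1
    · exact sI0 h1
    · exfalso
      have hx := (m4 x).1 h1
      rcases h' (x + 1) with h2 | h2
      · rw [m1, add_sub_cancel_right] at h2; exact hIJ _ h2.2 hx.1
      · rw [m4, add_sub_cancel_right] at h2; exact h2.2 hx.1
  have hJ' : I1 ∪ J0 ≠ Finset.univ := by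
    intro h
    have h' : ∀ x, x ∈ I1 ∨ x ∈ J0 := fun x => by
      rw [← Finset.mem_union, h]; exact Finset.mem_univ x
    apply hJ
    rw [Finset.eq_univ_iff_forall]
    intro x
    rcases h' x with h1 | h1
    · exfalso
      have hx := (m2 x).1 h1
      rcases h' (x + 1) with h2 | h2
      · rw [m2, add_sub_cancel_right] at h2; exact h2.2 hx.1
      · rw [m3, add_sub_cancel_right] at h2; exact hIJ _ hx.1 h2.2
    · exact sJ0 h1
  refine ⟨I0 ∪ J1, I1 ∪ J0, hI', hJ', ?_, ?_, ?_, ?_⟩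
  · rw [Finset.disjoint_left]
    intro x
    have := hIJ x
    simp only [Finset.mem_union, m1, m2, m3, m4]; tauto
  · ext x
    simp only [Finset.mem_union, m1, m2, m3, m4]; tauto
  · intro x hx hx1
    have := hIJ x
    have := hIJ (x - 1)
    simp only [Finset.mem_union, m1, m4] at hx hx1 ⊢; tauto
  · have a1 : P I = P I1 * P I0 := by
      conv_lhs => rw [eI]
      apply hP.union
      · rw [Finset.disjoint_left]; intro x; rw [m1, m2]; tauto
      · rwa [← eI]
      · intro y hy hy'
        rw [m1] at hy; rw [m2, add_sub_cancel_right] at hy'; exact hy'.2 hy.1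
    have a2 : Q J = Q J0 * Q J1 := by
      conv_lhs => rw [eJ]
      apply hQ.union
      · rw [Finset.disjoint_left]; intro x; rw [m3, m4]; tauto
      · rwa [← eJ]
      · intro y hy hy'
        rw [m3] at hy; rw [m4, add_sub_cancel_right] at hy'; exact hy'.2 hy.1
    have a3 : P I0 * Q J0 = Q J0 * P I0 := by
      apply hQ.commute (ne_univ_mono sJ0 hJ)
      intro j hj
      symm
      apply hP.commute (ne_univ_mono sI0 hI)
      intro i hi
      rw [m1] at hi; rw [m3] at hj
      apply hu.comm
      · intro h
        have : i = j - 1 := by rw [← h]; ring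
        rw [this] at hi; exact hIJ _ hi.1 hj.2
      · intro h
        have : j = i - 1 := by rw [← h]; ring
        rw [this] at hj; exact hIJ _ hi.2 hj.1
    have a4 : P I1 = Q I1 := by
      apply asc_eq_desc hP hQ (ne_univ_mono sI1 hI)
      intro x hx hx'
      rw [m2] at hx; rw [m2, add_sub_cancel_right] at hx'; exact hx'.2 hx.1
    have a5 : P J1 = Q J1 := by
      apply asc_eq_desc hP hQ (ne_univ_mono sJ1 hJ)
      intro x hx hx'
      rw [m4] at hx; rw [m4, add_sub_cancel_right] at hx'; exact hx'.2 hx.1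
    have a6 : Q (I1 ∪ J0) = Q I1 * Q J0 := by
      apply hQ.union (Finset.disjoint_of_subset_left sI1 (hd.mono_right sJ0)) hJ'
      intro x hx hx'
      rw [m3, add_sub_cancel_right] at hx'; exact hIJ _ (sI1 hx) hx'.2
    have a7 : P (I0 ∪ J1) = P I0 * P J1 := by
      apply hP.union (Finset.disjoint_of_subset_left sI0 (hd.mono_right sJ1)) hI'
      intro x hx hx'
      rw [m1, add_sub_cancel_right] at hx'; exact hIJ _ hx'.2 (sJ1 hx)
    rw [a1, a2, a6, a7, a4, a5]
    simp only [mul_assoc]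
    rw [← mul_assoc (P I0), a3, mul_assoc]

theorem exists_perm (S : Finset (ZMod N)) : ∃ π : Equiv.Perm (ZMod N),
    (∀ x, π x ∈ S ↔ x ∈ S) ∧ ∀ x ∈ S, x - 1 ∈ S → π (x - 1) = x := by
  obtain ⟨g, hg⟩ := Finset.exists_equiv_extend_of_card_eq (α := S) (t := S) (by simp)
    (s := Finset.univ.filter fun x : S => (x : ZMod N) + 1 ∈ S)
    (f := fun x => (x : ZMod N) + 1) (by
      intro y hy
      simp only [Finset.mem_image, Finset.mem_filter] at hy
      obtain ⟨x, hx, rfl⟩ := hy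
      exact hx.2) (by
      intro x _ y _ h
      exact Subtype.ext (add_right_cancel h))
  refine ⟨Equiv.Perm.ofSubtype (p := fun x => x ∈ S) g, ?_, ?_⟩
  · intro x
    exact Equiv.Perm.ofSubtype_apply_mem_iff_mem _ x
  · intro x hx hx1
    rw [Equiv.Perm.ofSubtype_apply_of_mem _ hx1]
    have := hg ⟨x - 1, hx1⟩ (by simpa using hx)
    simpa using this

theorem PQ_perm (hu : NTL N u) (hP : AscP N u P) (hQ : DescP N u Q) {I J : Finset (ZMod N)}
    (hI : I ≠ Finset.univ) (hJ : J ≠ Finset.univ) (hd : Disjoint I J) (π : Equiv.Perm (ZMod N))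
    (h1 : ∀ x, π x ∈ I ∪ J ↔ x ∈ I ∪ J) (h2 : ∀ x ∈ I ∪ J, x - 1 ∈ I ∪ J → π (x - 1) = x) :
    P I * Q J = Q (J.map π.toEmbedding) * P (I.map π.toEmbedding) := by
  obtain ⟨I', J', a1, a2, a3, a4, a5, a6⟩ := PQ_eq hu hP hQ hI hJ hd
  have c : ∀ X : Finset (ZMod N), X ≠ Finset.univ → X.map π.toEmbedding ≠ Finset.univ := by
    intro X hX h
    apply hX
    rw [← Finset.card_eq_iff_eq_univ] at h ⊢
    rwa [Finset.card_map] at h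
  have eU : I.map π.toEmbedding ∪ J.map π.toEmbedding = I ∪ J := by
    rw [← Finset.map_union]
    ext x
    rw [Finset.mem_map_equiv, ← h1]; simp
  rw [a6, QP_canon hP hQ a1 a2 a3, QP_canon hP hQ (c _ hI) (c _ hJ)
    ((Finset.disjoint_map _).2 hd), a4, eU]
  have : nb (I ∪ J) I' = nb (I ∪ J) (I.map π.toEmbedding) := by
    ext x
    simp only [nb, Finset.mem_filter]
    by_cases hx1 : x - 1 ∈ I ∪ J
    · simp only [hx1, and_true]
      by_cases hx : x ∈ I ∪ J
      · rw [a5 x hx hx1, Finset.mem_map_equiv, ← h2 x hx hx1, Equiv.symm_apply_apply]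
        rw [h2 x hx hx1]
      · have b1 : x ∉ I' := fun h => hx (a4 ▸ Finset.mem_union_left _ h)
        have b2 : x ∉ I.map π.toEmbedding := fun h => hx (eU ▸ Finset.mem_union_left _ h)
        simp only [b1, b2]
    · simp only [hx1, and_false]
  rw [this]

theorem eh_comm (hu : NTL N u) (hP : AscP N u P) (hQ : DescP N u Q) {r s : ℕ} (hr : r < N)
    (hs : s < N) :
    (∑ I ∈ Finset.powersetCard r (Finset.univ : Finset (ZMod N)), P I) *
      (∑ I ∈ Finset.powersetCard s (Finset.univ : Finset (ZMod N)), Q I) =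
    (∑ I ∈ Finset.powersetCard s (Finset.univ : Finset (ZMod N)), Q I) *
      (∑ I ∈ Finset.powersetCard r (Finset.univ : Finset (ZMod N)), P I) := by
  rw [Finset.sum_mul_sum, Finset.sum_mul_sum, Finset.sum_comm (s := Finset.powersetCard s _),
    ← Finset.sum_product', ← Finset.sum_product']
  have prop : ∀ (I : Finset (ZMod N)) (r : ℕ), r < N → I.card = r → I ≠ Finset.univ := by
    rintro I r hr rfl rfl
    simp [ZMod.card] at hr
  set D := (Finset.powersetCard r (Finset.univ : Finset (ZMod N)) ×ˢ
    Finset.powersetCard s (Finset.univ : Finset (ZMod N))) with hD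
  have mD : ∀ p, p ∈ D ↔ p.1.card = r ∧ p.2.card = s := by
    intro p; simp [hD, Finset.mem_powersetCard]
  have e1 : ∑ p ∈ D, P p.1 * Q p.2 = ∑ p ∈ D.filter (fun p => Disjoint p.1 p.2), P p.1 * Q p.2 := by
    symm
    apply Finset.sum_filter_of_ne
    intro p hp h
    by_contra h'
    rw [mD] at hp
    exact h (PQ_zero hP hQ (prop _ _ hr hp.1) (prop _ _ hs hp.2) h')
  have e2 : ∑ p ∈ D, Q p.2 * P p.1 = ∑ p ∈ D.filter (fun p => Disjoint p.1 p.2), Q p.2 * P p.1 := by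
    symm
    apply Finset.sum_filter_of_ne
    intro p hp h
    by_contra h'
    rw [mD] at hp
    exact h (QP_zero hP hQ (prop _ _ hr hp.1) (prop _ _ hs hp.2) h')
  rw [e1, e2]
  choose π h1 h2 using exists_perm (N := N)
  have key : ∀ S : Finset (ZMod N), S.map (π S).toEmbedding = S := by
    intro S; ext x; rw [Finset.mem_map_equiv, ← h1 S]; simp
  have key' : ∀ S : Finset (ZMod N), S.map (π S).symm.toEmbedding = S := by
    intro S; ext x; rw [Finset.mem_map_equiv]; simp [h1]
  refine Finset.sum_nbij'
    (fun p => (p.1.map (π (p.1 ∪ p.2)).toEmbedding, p.2.map (π (p.1 ∪ p.2)).toEmbedding))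
    (fun p => (p.1.map (π (p.1 ∪ p.2)).symm.toEmbedding,
      p.2.map (π (p.1 ∪ p.2)).symm.toEmbedding)) ?_ ?_ ?_ ?_ ?_
  · intro p hp
    simp only [Finset.mem_filter, mD, Finset.card_map, Finset.disjoint_map] at hp ⊢
    exact hp
  · intro p hp
    simp only [Finset.mem_filter, mD, Finset.card_map, Finset.disjoint_map] at hp ⊢
    exact hp
  · intro p hp
    simp only [← Finset.map_union, key]
    ext x <;> simp
  · intro p hp
    simp only [← Finset.map_union, key']
    ext x <;> simp
  · intro p hp
    simp only [Finset.mem_filter, mD] at hp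
    exact PQ_perm hu hP hQ (prop _ _ hr hp.1.1) (prop _ _ hs hp.1.2) hp.2 _ (h1 _) (h2 _)

end

/-! transfer matrices -/

/-- allowed consecutive states -/
def okE (s s' : Bool × Bool) : Bool := (!(s.1 && s.2) || s'.1) && (!(s'.1 && s'.2) || s.2)

/-- local type -/
def lab (s s' : Bool × Bool) : Bool × Bool × Bool := (s.1 || s.2, s.1 && s.2, s.2 && s'.1)

open Polynomial in
/-- transfer matrix -/
def TA (t : Bool × Bool × Bool) : Matrix (Bool × Bool) (Bool × Bool) ℤ[X] :=
  fun s s' => if okE s s' = true ∧ lab s s' = t then (if s.1 = true then X else 1) else 0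

open Polynomial in
/-- transfer matrix, colours swapped -/
def TB (t : Bool × Bool × Bool) : Matrix (Bool × Bool) (Bool × Bool) ℤ[X] :=
  fun s s' => if okE s s' = true ∧ lab s s' = t then (if s.2 = true then X else 1) else 0

open Polynomial in
/-- intertwiner -/
def RR : Matrix (Bool × Bool) (Bool × Bool) ℤ[X] := fun s s' =>
  match s, s' with
  | (false, false), (false, false) => 1
  | (true, false), (true, false) => X
  | (false, true), (true, false) => 1 - X
  | (false, true), (false, true) => 1
  | (true, true), (true, true) => X
  | _, _ => 0

open Polynomial in
/-- left inverse of the intertwiner up to scalar -/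
def RL : Matrix (Bool × Bool) (Bool × Bool) ℤ[X] := fun s s' =>
  match s, s' with
  | (false, false), (false, false) => X
  | (true, false), (true, false) => 1
  | (false, true), (true, false) => X - 1
  | (false, true), (false, true) => X
  | (true, true), (true, true) => 1
  | _, _ => 0

theorem TA_RR (t : Bool × Bool × Bool) : TA t * RR = RR * TB t := by
  obtain ⟨t1, t2, t3⟩ := t
  ext1 s s'
  obtain ⟨s1, s2⟩ := s
  obtain ⟨s1', s2'⟩ := s'
  simp only [Matrix.mul_apply, Fintype.sum_prod_type, Fintype.sum_bool]
  cases t1 <;> cases t2 <;> cases t3 <;> cases s1 <;> cases s2 <;> cases s1' <;> cases s2' <;>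
    simp [TA, TB, RR, okE, lab]
  ring

open Polynomial in
theorem RR_RL : RR * RL = (X : ℤ[X]) • (1 : Matrix (Bool × Bool) (Bool × Bool) ℤ[X]) := by
  ext1 s s'
  obtain ⟨s1, s2⟩ := s
  obtain ⟨s1', s2'⟩ := s'
  simp only [Matrix.mul_apply, Fintype.sum_prod_type, Fintype.sum_bool, Matrix.smul_apply]
  cases s1 <;> cases s2 <;> cases s1' <;> cases s2' <;>
    simp [RR, RL]

open Polynomial in
theorem RL_RR : RL * RR = (X : ℤ[X]) • (1 : Matrix (Bool × Bool) (Bool × Bool) ℤ[X]) := by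
  ext1 s s'
  obtain ⟨s1, s2⟩ := s
  obtain ⟨s1', s2'⟩ := s'
  simp only [Matrix.mul_apply, Fintype.sum_prod_type, Fintype.sum_bool, Matrix.smul_apply]
  cases s1 <;> cases s2 <;> cases s1' <;> cases s2' <;>
    simp [RR, RL]
  ring

section
variable {σ R : Type*} [Fintype σ] [DecidableEq σ] [CommRing R]

theorem ofFn_prod_apply (n : ℕ) (T : Fin (n+1) → Matrix σ σ R) (a b : σ) :
    (List.ofFn T).prod a b = ∑ w : Fin n → σ, ∏ i : Fin (n+1),
      T i ((Fin.cons a w : Fin (n+1) → σ) i) ((Fin.snoc w b : Fin (n+1) → σ) i) := by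
  induction n generalizing a with
  | zero => 
    simp [Fin.snoc]
  | succ n ih =>
    rw [List.ofFn_succ, List.prod_cons, Matrix.mul_apply,
      ← (Fin.consEquiv (fun _ : Fin (n+1) => σ)).sum_comp, Fintype.sum_prod_type]
    refine Finset.sum_congr rfl fun c _ => ?_
    rw [ih, Finset.mul_sum]
    refine Finset.sum_congr rfl fun w _ => ?_
    rw [Fin.prod_univ_succ (n := n+1)]
    have e : (Fin.snoc (Fin.consEquiv (fun _ : Fin (n+1) => σ) (c, w)) b : Fin (n+2) → σ)
      = Fin.cons c (Fin.snoc w b : Fin (n+1) → σ) := by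
      rw [Fin.cons_snoc_eq_snoc_cons]; rfl
    rw [e]
    simp only [Fin.cons_zero, Fin.cons_succ]
    rfl

theorem trace_ofFn (n : ℕ) (T : Fin (n+1) → Matrix σ σ R) :
    (List.ofFn T).prod.trace = ∑ v : Fin (n+1) → σ, ∏ i : Fin (n+1), T i (v i) (v (i+1)) := by
  rw [Matrix.trace, ← (Fin.consEquiv (fun _ : Fin (n+1) => σ)).sum_comp, Fintype.sum_prod_type]
  refine Finset.sum_congr rfl fun a _ => ?_
  rw [Matrix.diag_apply, ofFn_prod_apply]
  refine Finset.sum_congr rfl fun w _ => ?_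
  refine Finset.prod_congr rfl fun i _ => ?_
  have : (Fin.snoc w a : Fin (n+1) → σ) i = (Fin.cons a w : Fin (n+1) → σ) (i+1) := by
    induction i using Fin.lastCases with
    | last => simp
    | cast j => simp [Fin.coeSucc_eq_succ]
  rw [this]
  rfl

theorem ofFn_intertwine {n : ℕ} {S T : Fin n → Matrix σ σ R} {X : Matrix σ σ R}
    (h : ∀ i, S i * X = X * T i) : (List.ofFn S).prod * X = X * (List.ofFn T).prod := by
  induction n with
  | zero => simp
  | succ n ih =>
    rw [List.ofFn_succ, List.ofFn_succ, List.prod_cons, List.prod_cons, mul_assoc,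
      ih (fun i => h i.succ), ← mul_assoc, h, mul_assoc]

end

theorem cyc_sum_fin (n : ℕ) (t : Fin (n+1) → Bool × Bool × Bool) :
    ∑ v : Fin (n+1) → Bool × Bool, ∏ i, TA (t i) (v i) (v (i+1)) =
    ∑ v : Fin (n+1) → Bool × Bool, ∏ i, TB (t i) (v i) (v (i+1)) := by
  rw [← trace_ofFn n (fun i => TA (t i)), ← trace_ofFn n (fun i => TB (t i))]
  have h := ofFn_intertwine (S := fun i => TA (t i)) (T := fun i => TB (t i)) (X := RR)
    (fun i => TA_RR (t i))
  set S := (List.ofFn fun i => TA (t i)).prod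
  set T := (List.ofFn fun i => TB (t i)).prod
  have h1 : (S * RR * RL).trace = (RR * T * RL).trace := by rw [h]
  rw [mul_assoc, RR_RL, Matrix.trace_mul_comm (RR * T), ← mul_assoc, RL_RR] at h1
  simp only [mul_smul_comm, smul_mul_assoc, mul_one, one_mul, Matrix.trace_smul, smul_eq_mul] at h1
  exact mul_left_cancel₀ Polynomial.X_ne_zero h1

theorem cyc_sum (N : ℕ) [NeZero N] (t : ZMod N → Bool × Bool × Bool) :
    ∑ v : ZMod N → Bool × Bool, ∏ i, TA (t i) (v i) (v (i+1)) =
    ∑ v : ZMod N → Bool × Bool, ∏ i, TB (t i) (v i) (v (i+1)) := by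
  cases N with
  | zero => exact absurd rfl (NeZero.ne 0)
  | succ n => exact cyc_sum_fin n t

section
variable {N : ℕ} [NeZero N]

/-- state of a pair at a vertex -/
def vv (p : Finset (ZMod N) × Finset (ZMod N)) (i : ZMod N) : Bool × Bool :=
  (decide (i ∈ p.1), decide (i ∈ p.2))

/-- the pair is allowed -/
def oks (p : Finset (ZMod N) × Finset (ZMod N)) : Prop :=
  ∀ i, okE (vv p i) (vv p (i+1)) = true

/-- the type of a pair -/
def typ (p : Finset (ZMod N) × Finset (ZMod N)) (i : ZMod N) : Bool × Bool × Bool :=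
  lab (vv p i) (vv p (i+1))

/-- pairs of sets as words -/
def vvEquiv : Finset (ZMod N) × Finset (ZMod N) ≃ (ZMod N → Bool × Bool) where
  toFun := vv
  invFun v := (Finset.univ.filter fun i => (v i).1 = true,
    Finset.univ.filter fun i => (v i).2 = true)
  left_inv p := by ext i <;> simp [vv]
  right_inv v := by ext i <;> simp [vv]

open Polynomial in
theorem sum_pairs (t : ZMod N → Bool × Bool × Bool) [DecidablePred (oks (N := N))] :
    ∑ p : Finset (ZMod N) × Finset (ZMod N), (if oks p ∧ typ p = t then (X : ℤ[X]) ^ p.1.card else 0)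
    = ∑ p : Finset (ZMod N) × Finset (ZMod N),
      (if oks p ∧ typ p = t then (X : ℤ[X]) ^ p.2.card else 0) := by
  have h := cyc_sum N t
  rw [← vvEquiv.sum_comp, ← vvEquiv.sum_comp] at h
  have c : ∀ p : Finset (ZMod N) × Finset (ZMod N), (oks p ∧ typ p = t) ↔
      ∀ i ∈ (Finset.univ : Finset (ZMod N)),
        (okE (vv p i) (vv p (i+1)) = true ∧ lab (vv p i) (vv p (i+1)) = t i) := by
    intro p
    simp only [oks, funext_iff, typ, Finset.mem_univ, true_imp_iff, forall_and]
  convert h using 2 with p _ p _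
  · have : ∀ i, TA (t i) (vvEquiv p i) (vvEquiv p (i+1)) =
      if (okE (vv p i) (vv p (i+1)) = true ∧ lab (vv p i) (vv p (i+1)) = t i) then
        (if i ∈ p.1 then X else 1) else 0 := by
      intro i; simp [TA, vvEquiv, vv]; congr
    simp only [this]
    rw [Finset.prod_ite_zero]
    simp only [c p]
    congr 1
    rw [Finset.prod_ite_mem]; simp
  · have : ∀ i, TB (t i) (vvEquiv p i) (vvEquiv p (i+1)) =
      if (okE (vv p i) (vv p (i+1)) = true ∧ lab (vv p i) (vv p (i+1)) = t i) then
        (if i ∈ p.2 then X else 1) else 0 := by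
      intro i; simp [TB, vvEquiv, vv]; congr
    simp only [this]
    rw [Finset.prod_ite_zero]
    simp only [c p]
    congr 1
    rw [Finset.prod_ite_mem]; simp

open Polynomial in
theorem card_pairs (t : ZMod N → Bool × Bool × Bool) (r : ℕ) [DecidablePred (oks (N := N))] :
    (Finset.univ.filter fun p : Finset (ZMod N) × Finset (ZMod N) =>
      (oks p ∧ typ p = t) ∧ p.1.card = r).card =
    (Finset.univ.filter fun p : Finset (ZMod N) × Finset (ZMod N) =>
      (oks p ∧ typ p = t) ∧ p.2.card = r).card := by
  have h := congrArg (fun q : ℤ[X] => q.coeff r) (sum_pairs t)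
  have e : ∀ (c : Prop) [Decidable c] (k : ℕ), (if c then (X : ℤ[X]) ^ k else 0).coeff r =
      if c ∧ k = r then 1 else 0 := by
    intro c _ k
    by_cases hc : c
    · simp [hc, coeff_X_pow, eq_comm]
    · simp [hc]
  simp only [finsetSum_coeff, e] at h
  rw [Finset.sum_boole, Finset.sum_boole] at h
  exact_mod_cast h

theorem typ_iff {p q : Finset (ZMod N) × Finset (ZMod N)} (h : typ p = typ q) (i : ZMod N) :
    (i ∈ p.1 ∨ i ∈ p.2 ↔ i ∈ q.1 ∨ i ∈ q.2) ∧ (i ∈ p.1 ∧ i ∈ p.2 ↔ i ∈ q.1 ∧ i ∈ q.2) ∧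
    (i ∈ p.2 ∧ i + 1 ∈ p.1 ↔ i ∈ q.2 ∧ i + 1 ∈ q.1) := by
  have := congrFun h i
  simp only [typ, lab, vv, Prod.mk.injEq, ← Bool.decide_or, ← Bool.decide_and,
    decide_eq_decide] at this
  exact this

theorem typ_card {p q : Finset (ZMod N) × Finset (ZMod N)} (h : typ p = typ q) :
    p.1.card + p.2.card = q.1.card + q.2.card := by
  rw [← Finset.card_union_add_card_inter, ← Finset.card_union_add_card_inter q.1]
  congr 2
  · ext i; simpa using (typ_iff h i).1
  · ext i; simpa using (typ_iff h i).2.1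

variable {A : Type*} [Ring A] {u : ZMod N → A} {P : Finset (ZMod N) → A}

theorem PP_zero (hP : AscP N u P) {p : Finset (ZMod N) × Finset (ZMod N)}
    (hI : p.1 ≠ Finset.univ) (hJ : p.2 ≠ Finset.univ) (h : ¬ oks p) : P p.1 * P p.2 = 0 := by
  simp only [oks, not_forall] at h
  obtain ⟨i, hi⟩ := h
  have hi' : (i ∈ p.1 ∧ i ∈ p.2 ∧ i + 1 ∉ p.1) ∨ (i + 1 ∈ p.1 ∧ i + 1 ∈ p.2 ∧ i ∉ p.2) := by
    by_contra hc
    apply hi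
    simp only [okE, vv, Bool.and_eq_true, Bool.or_eq_true, Bool.not_eq_true',
      Bool.and_eq_false_iff, decide_eq_true_eq, decide_eq_false_iff_not]
    tauto
  rcases hi' with ⟨h1, h2, h3⟩ | ⟨h1, h2, h3⟩
  · rw [hP.right _ hI i h1 h3, mul_assoc, hP.lz _ hJ i h2, mul_zero]
  · rw [hP.left _ hJ (i+1) h2 (by simpa using h3), ← mul_assoc, hP.rz _ hI _ h1, zero_mul]

theorem PP_typ (hN : 3 ≤ N) (hP : AscP N u P) (n : ℕ) :
    ∀ I J I' J' : Finset (ZMod N), I ≠ Finset.univ → J ≠ Finset.univ →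
      I' ≠ Finset.univ → J' ≠ Finset.univ →
      (∀ i, (i ∈ I ∨ i ∈ J ↔ i ∈ I' ∨ i ∈ J') ∧ (i ∈ I ∧ i ∈ J ↔ i ∈ I' ∧ i ∈ J') ∧
        (i ∈ J ∧ i + 1 ∈ I ↔ i ∈ J' ∧ i + 1 ∈ I')) →
      (I \ I').card + (I' \ I).card = n → P I * P J = P I' * P J' := by
  induction n using Nat.strong_induction_on with
  | _ n ih =>
  have main : ∀ I J I' J' : Finset (ZMod N), I ≠ Finset.univ → J ≠ Finset.univ →
      I' ≠ Finset.univ → J' ≠ Finset.univ →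
      (∀ i, (i ∈ I ∨ i ∈ J ↔ i ∈ I' ∨ i ∈ J') ∧ (i ∈ I ∧ i ∈ J ↔ i ∈ I' ∧ i ∈ J') ∧
        (i ∈ J ∧ i + 1 ∈ I ↔ i ∈ J' ∧ i + 1 ∈ I')) →
      (I \ I').card + (I' \ I).card = n → (I \ I').Nonempty → P I * P J = P I' * P J' := by
    intro I J I' J' hI hJ hI' hJ' hs hn hne
    obtain ⟨i, hi, hi1⟩ := exists_top (ne_univ_mono Finset.sdiff_subset hI) hne
    rw [Finset.mem_sdiff] at hi hi1
    have h0 := hs i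
    have iJ : i ∉ J := fun h => hi.2 (h0.2.1.1 ⟨hi.1, h⟩).1
    have iJ' : i ∈ J' := (h0.1.1 (Or.inl hi.1)).resolve_left hi.2
    have i1' : i + 1 ∉ I' := fun h => iJ (h0.2.2.2 ⟨iJ', h⟩).1
    have i1 : i + 1 ∉ I := fun h => hi1 ⟨h, i1'⟩
    have hm := hs (i - 1)
    rw [sub_add_cancel] at hm
    have im : i - 1 ∉ J := fun h => hi.2 (hm.2.2.1 ⟨h, hi.1⟩).2
    have one_ne : (1 : ZMod N) ≠ 0 := by
      have : Fact (1 < N) := ⟨by omega⟩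
      exact one_ne_zero
    have hJ2 : insert i J ≠ Finset.univ := by
      apply ne_univ_of_notMem (i := i - 1)
      rw [Finset.mem_insert, not_or]
      exact ⟨by simpa using one_ne, im⟩
    have e : P I * P J = P (I.erase i) * P (insert i J) := by
      rw [hP.right _ hI i hi.1 i1, hP.left _ hJ2 i (Finset.mem_insert_self _ _) (by
        rw [Finset.mem_insert, not_or]
        exact ⟨by simpa using one_ne, im⟩), Finset.erase_insert iJ, mul_assoc]
    rw [e]
    have d1 : (I.erase i \ I').card < (I \ I').card := by
      apply Finset.card_lt_card
      rw [Finset.ssubset_iff_of_subset (Finset.sdiff_subset_sdiff (Finset.erase_subset _ _) le_rfl)]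
      exact ⟨i, by simp [hi], by simp⟩
    have d2 : I' \ I.erase i = I' \ I := by
      ext x
      simp only [Finset.mem_sdiff, Finset.mem_erase]
      by_cases hx : x = i
      · subst hx; simp [hi.2]
      · simp [hx]
    refine ih _ ?_ _ _ _ _ (ne_univ_mono (Finset.erase_subset _ _) hI) hJ2 hI' hJ' ?_ rfl
    · rw [d2]; omega
    · intro x
      have hx := hs x
      simp only [Finset.mem_erase, Finset.mem_insert]
      by_cases hxi : x = i
      · subst hxi
        simp [hi.2, iJ', i1, i1']
      · by_cases hxi1 : x + 1 = i
        · have : x = i - 1 := by rw [← hxi1]; ring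
          subst this
          rw [sub_add_cancel] at hx ⊢
          exact ⟨by simpa [hxi, one_ne] using hx.1, by simpa [hxi, one_ne] using hx.2.1, by simp [hi.2]⟩
        · simpa [hxi, hxi1] using hx
  intro I J I' J' hI hJ hI' hJ' hs hn
  rcases (I \ I').eq_empty_or_nonempty with h1 | h1
  · rcases (I' \ I).eq_empty_or_nonempty with h2 | h2
    · have hII : I = I' := Finset.Subset.antisymm (Finset.sdiff_eq_empty_iff_subset.1 h1)
        (Finset.sdiff_eq_empty_iff_subset.1 h2)
      subst hII
      have : J = J' := by
        ext x
        have := hs x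
        tauto
      rw [this]
    · refine (main I' J' I J hI' hJ' hI hJ (fun i => ?_) (by rw [add_comm]; exact hn) h2).symm
      have := hs i
      exact ⟨this.1.symm, this.2.1.symm, this.2.2.symm⟩
  · exact main I J I' J' hI hJ hI' hJ' hs hn h1

theorem ee_comm (hN : 3 ≤ N) (hP : AscP N u P) {r s : ℕ} (hr : r < N) (hs : s < N) :
    (∑ I ∈ Finset.powersetCard r (Finset.univ : Finset (ZMod N)), P I) *
      (∑ I ∈ Finset.powersetCard s (Finset.univ : Finset (ZMod N)), P I) =
    (∑ I ∈ Finset.powersetCard s (Finset.univ : Finset (ZMod N)), P I) *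
      (∑ I ∈ Finset.powersetCard r (Finset.univ : Finset (ZMod N)), P I) := by
  classical
  have prop : ∀ (I : Finset (ZMod N)) (r : ℕ), r < N → I.card = r → I ≠ Finset.univ := by
    rintro I r hr rfl rfl
    simp [ZMod.card] at hr
  let D : ℕ → ℕ → Finset (Finset (ZMod N) × Finset (ZMod N)) := fun r s =>
    Finset.univ.filter fun p => oks p ∧ p.1.card = r ∧ p.2.card = s
  have ex : ∀ r s : ℕ, r < N → s < N →
    (∑ I ∈ Finset.powersetCard r (Finset.univ : Finset (ZMod N)), P I) *
      (∑ I ∈ Finset.powersetCard s (Finset.univ : Finset (ZMod N)), P I) =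
      ∑ t : ZMod N → Bool × Bool × Bool, ∑ p ∈ (D r s).filter (fun p => typ p = t),
        P p.1 * P p.2 := by
    intro r s hr hs
    rw [Finset.sum_mul_sum, ← Finset.sum_product', Finset.sum_fiberwise]
    symm
    apply Finset.sum_subset
    · intro p hp
      simp only [D, Finset.mem_filter, Finset.mem_univ, true_and] at hp
      simp [Finset.mem_powersetCard, hp]
    · intro p hp hp'
      simp only [Finset.mem_product, Finset.mem_powersetCard, Finset.subset_univ, true_and] at hp
      simp only [D, Finset.mem_filter, Finset.mem_univ, true_and, hp, and_true] at hp'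
      exact PP_zero hP (prop _ _ hr hp.1) (prop _ _ hs hp.2) hp'
  rw [ex r s hr hs, ex s r hs hr]
  refine Finset.sum_congr rfl fun t _ => ?_
  have mD : ∀ r s p, p ∈ (D r s).filter (fun p => typ p = t) ↔
      (oks p ∧ typ p = t) ∧ p.1.card = r ∧ p.2.card = s := by
    intro r s p; simp only [D, Finset.mem_filter, Finset.mem_univ, true_and]; tauto
  by_cases hex : ∃ p : Finset (ZMod N) × Finset (ZMod N), typ p = t ∧
      ((p.1.card = r ∧ p.2.card = s) ∨ (p.1.card = s ∧ p.2.card = r))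
  · obtain ⟨p0, ht, hc⟩ := hex
    have hp0 : p0.1 ≠ Finset.univ ∧ p0.2 ≠ Finset.univ := by
      rcases hc with hc | hc
      · exact ⟨prop _ _ hr hc.1, prop _ _ hs hc.2⟩
      · exact ⟨prop _ _ hs hc.1, prop _ _ hr hc.2⟩
    have const : ∀ p : Finset (ZMod N) × Finset (ZMod N), p.1 ≠ Finset.univ → p.2 ≠ Finset.univ →
        typ p = t → P p.1 * P p.2 = P p0.1 * P p0.2 := by
      intro p h1 h2 h3
      exact PP_typ hN hP _ _ _ _ _ h1 h2 hp0.1 hp0.2 (typ_iff (h3.trans ht.symm)) rfl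
    have tot : ∀ p : Finset (ZMod N) × Finset (ZMod N), typ p = t →
        p.1.card + p.2.card = r + s := by
      intro p h
      have := typ_card (h.trans ht.symm)
      omega
    have f1 : (D r s).filter (fun p => typ p = t) =
        Finset.univ.filter fun p : Finset (ZMod N) × Finset (ZMod N) =>
          (oks p ∧ typ p = t) ∧ p.1.card = r := by
      ext p
      rw [mD, Finset.mem_filter]
      constructor
      · rintro ⟨h1, h2, h3⟩; exact ⟨Finset.mem_univ _, h1, h2⟩
      · rintro ⟨_, h1, h2⟩
        have := tot p h1.2
        exact ⟨h1, h2, by omega⟩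
    have f2 : (D s r).filter (fun p => typ p = t) =
        Finset.univ.filter fun p : Finset (ZMod N) × Finset (ZMod N) =>
          (oks p ∧ typ p = t) ∧ p.2.card = r := by
      ext p
      rw [mD, Finset.mem_filter]
      constructor
      · rintro ⟨h1, h2, h3⟩; exact ⟨Finset.mem_univ _, h1, h3⟩
      · rintro ⟨_, h1, h2⟩
        have := tot p h1.2
        exact ⟨h1, by omega, h2⟩
    rw [Finset.sum_congr rfl (g := fun _ => P p0.1 * P p0.2), Finset.sum_const,
      Finset.sum_congr (s₁ := (D s r).filter (fun p => typ p = t)) rfl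
        (g := fun _ => P p0.1 * P p0.2), Finset.sum_const, f1, f2, card_pairs]
    · intro p hp
      rw [mD] at hp
      exact const p (prop _ _ hs hp.2.1) (prop _ _ hr hp.2.2) hp.1.2
    · intro p hp
      rw [mD] at hp
      exact const p (prop _ _ hr hp.2.1) (prop _ _ hs hp.2.2) hp.1.2
  · have z1 : (D r s).filter (fun p => typ p = t) = ∅ := by
      rw [Finset.eq_empty_iff_forall_notMem]
      intro p hp; rw [mD] at hp
      exact hex ⟨p, hp.1.2, Or.inl hp.2⟩
    have z2 : (D s r).filter (fun p => typ p = t) = ∅ := by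
      rw [Finset.eq_empty_iff_forall_notMem]
      intro p hp; rw [mD] at hp
      exact hex ⟨p, hp.1.2, Or.inr hp.2⟩
    rw [z1, z2]

end

theorem ntl_uTL (N : ℕ) : NTL N (uTL N) where
  sq i := by
    have := RingQuot.mkAlgHom_rel ℂ (TLRel.sq (N := N) i)
    simpa [uTL] using this
  aba i := by
    have := RingQuot.mkAlgHom_rel ℂ (TLRel.aba (N := N) i)
    simpa [uTL] using this
  bab i := by
    have := RingQuot.mkAlgHom_rel ℂ (TLRel.bab (N := N) i)
    simpa [uTL] using this
  comm i j h1 h2 := by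
    have := RingQuot.mkAlgHom_rel ℂ (TLRel.comm (N := N) i j h1 h2)
    simpa [uTL] using this

theorem tlH_eq (N : ℕ) [NeZero N] (r : ℕ) : tlH N r =
    ∑ I ∈ Finset.powersetCard r (Finset.univ : Finset (ZMod N)),
      cycProdDesc (uTL N) (negF I) := by
  rw [tlH]
  refine Finset.sum_nbij' negF negF ?_ ?_ ?_ ?_ ?_
  · intro I hI; simpa [Finset.mem_powersetCard, card_negF] using hI
  · intro I hI; simpa [Finset.mem_powersetCard, card_negF] using hI
  · intro I _; exact negF_negF I
  · intro I _; exact negF_negF I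
  · intro I _; rw [negF_negF]

/-- In the affine nil-Temperley–Lieb algebra all the cyclic
noncommutative elementary and complete symmetric polynomials
`e_1, …, e_{N-1}, h_1, …, h_{N-1}` pairwise commute. -/
theorem nilTL_symm_commute (N : ℕ) [NeZero N] (hN : 3 ≤ N) (r s : ℕ)
    (hr1 : 1 ≤ r) (hr2 : r ≤ N - 1) (hs1 : 1 ≤ s) (hs2 : s ≤ N - 1) :
    tlE N r * tlE N s = tlE N s * tlE N r ∧
    tlE N r * tlH N s = tlH N s * tlE N r ∧
    tlH N r * tlH N s = tlH N s * tlH N r := by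
  have hu := ntl_uTL N
  have hr : r < N := by omega
  have hs : s < N := by omega
  refine ⟨ee_comm hN (ascP_cyc hu) hr hs,
    eh_comm hu (ascP_cyc hu) (descP_of (descP_cyc hu)) hr hs, ?_⟩
  rw [tlH_eq, tlH_eq]
  exact ee_comm hN (descP_cyc hu) hr hs
end
end

section
/- Let n, k ≥ 1, N = n+k ≥ 3. Let y ∈ ℂ^k have nonzero, pairwise distinct entries with y_1^N = y_2^N = ⋯ = y_k^N, and set q = (−1)^{k−1} y_1^N. Then, with the operators u_1,…,u_N on the complex vector space with basis W_{k,N} defined using this complex number q, the vector b̃(y) = Σ_{λ ∈ 𝔓_{≤k,n}} s_λ(y_1^{−1},…,y_k^{−1})·w(λ) is a simultaneous eigenvector: e_r(𝒰)·b̃(y) = e_r(y)·b̃(y) and h_r(𝒰)·b̃(y) = h_r(y)·b̃(y) for every 1 ≤ r ≤ N−1. -/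
noncomputable section

open scoped BigOperators

/-- `𝔓_{≤r,c}`: partitions with at most `r` parts, each part at most `c`. -/
abbrev PartBox (r c : ℕ) :=
  {f : Fin r → Fin (c + 1) // ∀ i j : Fin r, i ≤ j → (f j : ℕ) ≤ (f i : ℕ)}

/-- The parts of a partition, as natural numbers. -/
def partVal {r c : ℕ} (σ : PartBox r c) (i : Fin r) : ℕ := (σ.1 i : ℕ)

/-- `|σ|`, the number of boxes. -/
def partSum {r c : ℕ} (σ : PartBox r c) : ℕ := ∑ i, partVal σ i

/-- A tuple of parts, padded by zeros. -/
def padded {r : ℕ} (f : Fin r → ℕ) (t : ℕ) : ℕ := if h : t < r then f ⟨t, h⟩ else 0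

/-- The transpose partition: `(transpGen μ c) j = μ^t_{j+1} = #{i | μ_i ≥ j+1}`. -/
def transpGen {r : ℕ} (μ : Fin r → ℕ) (c : ℕ) : Fin c → ℕ :=
  fun j => (Finset.univ.filter fun i : Fin r => (j : ℕ) + 1 ≤ μ i).card

/-- `I^{(m)}(τ)_j = (m+1)/2 + τ_{m+1-j} - (m+1-j)` (1-based `j`), as a rational number. -/
def Imap (m : ℕ) (τ : Fin m → ℕ) (j : Fin m) : ℚ :=
  ((m : ℚ) + 1) / 2 + (τ j.rev : ℚ) - ((m : ℚ) - (j : ℚ))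

/-- `ζ^t = exp(2πι t/N)` for rational exponents `t`. -/
def zeta (N : ℕ) (t : ℚ) : ℂ :=
  Complex.exp (2 * Real.pi * Complex.I * (t : ℂ) / (N : ℂ))

/-- Elementary symmetric polynomial `e_r(x)` of a tuple of complex numbers. -/
def eC {m : ℕ} (x : Fin m → ℂ) (r : ℤ) : ℂ :=
  if 0 ≤ r then ∑ I ∈ Finset.powersetCard r.toNat (Finset.univ : Finset (Fin m)), ∏ i ∈ I, x i
  else 0

/-- Complete homogeneous symmetric polynomial `h_r(x)` of a tuple of complex numbers. -/
def hC {m : ℕ} (x : Fin m → ℂ) (r : ℤ) : ℂ :=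
  if 0 ≤ r then
    ∑ p ∈ (Fintype.piFinset fun _ : Fin m => Finset.range (r.toNat + 1)).filter
        (fun p => ∑ i, p i = r.toNat),
      ∏ i, x i ^ p i
  else 0

/-- The Schur polynomial `s_λ(x) = det(h_{λ_i-i+j}(x))_{1 ≤ i,j ≤ m}`. -/
def schurC {m : ℕ} (x : Fin m → ℂ) (lam : Fin m → ℕ) : ℂ :=
  (Matrix.of fun i j : Fin m => hC x ((lam i : ℤ) - (i : ℕ) + (j : ℕ))).det

/-- The determinant of a square matrix over a (possibly noncommutative) ring, expanded via
the Leibniz formula. -/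
def ncDet {A : Type*} [Ring A] {r : ℕ} (M : Fin r → Fin r → A) : A :=
  ∑ σ : Equiv.Perm (Fin r),
    ((Equiv.Perm.sign σ : ℤ) : A) * ((List.finRange r).map fun i => M (σ i) i).prod

/-- The free `R`-module with basis the set of 01-words of length `N` (a word is a function
`ℤ/Nℤ → Bool`, the 1-based position `ℓ` being encoded as `ℓ mod N`). -/
abbrev WSp (R : Type*) [CommRing R] (N : ℕ) := (ZMod N → Bool) →₀ R

/-- The 01-word `w(λ) ∈ W_{k,N}` of a partition `λ ∈ 𝔓_{≤k,n}`: the 1-letters occupy the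
positions `ℓ_i = λ_{k+1-i} + i`, `i = 1, …, k`. -/
def wordOf (N k : ℕ) (lam : Fin k → ℕ) : ZMod N → Bool :=
  fun p => decide (∃ i : Fin k, p = ((lam i.rev + (i : ℕ) + 1 : ℕ) : ZMod N))

/-- The hopping operator `u_c` (for `c = i mod N` this is the operator `u_i`, `1 ≤ i ≤ N`):
it moves a particle from position `c` to position `c+1` when possible (sends the word to 0
otherwise), with the extra factor `q` for `u_N` (i.e. `c = 0`). -/
def uOp (R : Type*) [CommRing R] (N : ℕ) [NeZero N] (q : R) (c : ZMod N) :
    Module.End R (WSp R N) :=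
  Finsupp.lift (WSp R N) R (ZMod N → Bool) fun w =>
    if w c = true ∧ w (c + 1) = false then
      Finsupp.single (w ∘ (Equiv.swap c (c + 1))) (if c = 0 then q else 1)
    else 0

/-- The noncommutative elementary symmetric polynomials `e_t(𝒰)`, with the conventions
`e_0 = id` and `e_t = 0` for `t < 0`. -/
def eUInt (R : Type*) [CommRing R] (N : ℕ) [NeZero N] (q : R) (t : ℤ) :
    Module.End R (WSp R N) :=
  if t = 0 then 1
  else if 1 ≤ t ∧ t ≤ (N : ℤ) - 1 then
    ∑ I ∈ Finset.powersetCard t.toNat (Finset.univ : Finset (ZMod N)),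
      cycProdAsc (uOp R N q) I
  else 0

/-- The noncommutative complete symmetric polynomial `h_r(𝒰)`. -/
def hUOp (R : Type*) [CommRing R] (N : ℕ) [NeZero N] (q : R) (r : ℕ) :
    Module.End R (WSp R N) :=
  ∑ I ∈ Finset.powersetCard r (Finset.univ : Finset (ZMod N)), cycProdDesc (uOp R N q) I

/-- The noncommutative Schur polynomial
`s_λ(𝒰) = det(e_{λ^t_i - i + j}(𝒰))_{1 ≤ i,j ≤ λ_1}` of a partition given by its parts. -/
def sUOp (R : Type*) [CommRing R] (N : ℕ) [NeZero N] (q : R) {r : ℕ} (lam : Fin r → ℕ) :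
    Module.End R (WSp R N) :=
  ncDet fun i j : Fin (padded lam 0) =>
    eUInt R N q ((transpGen lam (padded lam 0) i : ℤ) - ((i : ℕ) : ℤ) + ((j : ℕ) : ℤ))

/-- The `R`-bilinear pairing on the word space making the basis of words orthonormal. -/
def pairW {R : Type*} [CommRing R] {N : ℕ} [NeZero N] (f g : WSp R N) : R :=
  ∑ w : ZMod N → Bool, f w * g w

/-- The free-fermion Bethe vector `b̃(y) = Σ_{λ ∈ 𝔓_{≤k,n}} s_λ(y₁⁻¹, …, y_k⁻¹) · w(λ)`. -/
def fermiBethe (n k : ℕ) [NeZero (n + k)] (y : Fin k → ℂ) : WSp ℂ (n + k) :=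
  ∑ σ : PartBox k n,
    Finsupp.single (wordOf (n + k) k (partVal σ)) (schurC (fun i => (y i)⁻¹) (partVal σ))



theorem uOp_apply' {N : ℕ} [NeZero N] (q : ℂ) (c : ZMod N) (f : WSp ℂ N) (w : ZMod N → Bool) :
    (uOp ℂ N q c f) w = if w c = false ∧ w (c+1) = true then
      (if c = 0 then q else 1) * f (w ∘ Equiv.swap c (c+1)) else 0 := by
  induction f using Finsupp.induction_linear with
  | zero => simp
  | add f g hf hg =>
    rw [map_add, Finsupp.add_apply, hf, hg]
    split_ifs <;> simp [mul_add]
  | single w' a =>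
    have key : (w' ∘ Equiv.swap c (c+1) = w) ↔ (w' = w ∘ Equiv.swap c (c+1)) := by
      constructor
      · rintro rfl; ext p; simp
      · rintro rfl; ext p; simp
    by_cases h : w' = w ∘ Equiv.swap c (c+1)
    · subst h
      simp only [uOp, Finsupp.lift_apply]
      rw [Finsupp.sum_single_index (by simp)]
      simp only [Function.comp, Equiv.swap_apply_left, Equiv.swap_apply_right]
      by_cases h1 : w c = false ∧ w (c+1) = true
      · rw [if_pos h1.symm, if_pos h1]
        simp [Function.comp_def, mul_comm]
      · rw [if_neg (fun h => h1 h.symm), if_neg h1]; simp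
    · simp only [uOp, Finsupp.lift_apply]
      rw [Finsupp.sum_single_index (by simp)]
      have h' := h
      rw [← key] at h'
      rw [Finsupp.single_apply, if_neg h]
      split_ifs <;> simp [h']

theorem uOp_sq {N : ℕ} [NeZero N] (q : ℂ) (c : ZMod N) : uOp ℂ N q c * uOp ℂ N q c = 0 := by
  apply LinearMap.ext; intro f
  ext w
  rw [Module.End.mul_apply, uOp_apply', uOp_apply']
  by_cases h : w c = false ∧ w (c+1) = true
  · rw [if_pos h, if_neg (c := _ ∧ _) (by simp [h.1])]; simp
  · rw [if_neg h]; simp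

def AscL {N : ℕ} (L : List (ZMod N)) : Prop := L.Pairwise (fun a b => a ≠ b ∧ a ≠ b + 1)
def DescL {N : ℕ} (L : List (ZMod N)) : Prop := L.Pairwise (fun a b => a ≠ b ∧ b ≠ a + 1)

def backA {N : ℕ} (w : ZMod N → Bool) (L : Finset (ZMod N)) : ZMod N → Bool :=
  fun p => decide (p ∈ L ∨ (w p = true ∧ p - 1 ∉ L))
def backD {N : ℕ} (w : ZMod N → Bool) (L : Finset (ZMod N)) : ZMod N → Bool :=
  fun p => decide (p - 1 ∉ L ∧ (w p = true ∨ p ∈ L))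

def condA {N : ℕ} (w : ZMod N → Bool) (L : Finset (ZMod N)) : Prop :=
  ∀ i ∈ L, w (i+1) = true ∧ (i - 1 ∉ L → w i = false)
def condD {N : ℕ} (w : ZMod N → Bool) (L : Finset (ZMod N)) : Prop :=
  ∀ i ∈ L, w i = false ∧ (i + 1 ∉ L → w (i+1) = true)

theorem zne {N : ℕ} (hN : 3 ≤ N) (c : ZMod N) : c + 1 ≠ c := by
  have : Fact (1 < N) := ⟨by omega⟩
  simp

open Classical in
theorem asc_apply {N : ℕ} [NeZero N] (hN : 3 ≤ N) (q : ℂ) (f : WSp ℂ N) (L : List (ZMod N))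
    (hL : AscL L) (w : ZMod N → Bool) :
    ((L.map (uOp ℂ N q)).prod f) w = if condA w L.toFinset then
      (if (0 : ZMod N) ∈ L.toFinset then q else 1) * f (backA w L.toFinset) else 0 := by
  induction L generalizing w with
  | nil =>
    have : backA w ∅ = w := by funext p; simp [backA]
    simp [condA, this]
  | cons c L ih =>
    have hL' := List.pairwise_cons.1 hL
    have hc : ∀ b ∈ L, c ≠ b ∧ c ≠ b + 1 := hL'.1
    have hc1 := zne hN c
    rw [List.map_cons, List.prod_cons, Module.End.mul_apply, uOp_apply']
    have hcL : c ∉ L := fun h => (hc c h).1 rfl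
    by_cases h : w c = false ∧ w (c+1) = true
    · rw [if_pos h, ih hL'.2]
      have e1 : condA (w ∘ Equiv.swap c (c+1)) L.toFinset ↔ condA w (c :: L).toFinset := by
        simp only [condA, List.mem_toFinset, List.mem_cons, Function.comp]
        have s1 : ∀ i ∈ L, Equiv.swap c (c+1) (i+1) = i+1 := fun i hi =>
          Equiv.swap_apply_of_ne_of_ne (fun h => (hc i hi).2 h.symm)
            (fun h => (hc i hi).1 (add_right_cancel h).symm)
        constructor
        · rintro H i (rfl | hi)
          · exact ⟨h.2, fun _ => h.1⟩
          · refine ⟨by have := (H i hi).1; rwa [s1 i hi] at this, ?_⟩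
            intro h2
            push Not at h2
            have := (H i hi).2 h2.2
            rwa [Equiv.swap_apply_of_ne_of_ne (fun h => (hc i hi).1 h.symm)] at this
            rintro rfl; simp at h2
        · intro H i hi
          refine ⟨by rw [s1 i hi]; exact (H i (Or.inr hi)).1, fun h2 => ?_⟩
          by_cases h3 : i = c + 1
          · subst h3; rw [Equiv.swap_apply_right]; exact h.1
          · rw [Equiv.swap_apply_of_ne_of_ne (fun h => (hc i hi).1 h.symm) h3]
            apply (H i (Or.inr hi)).2
            rintro (h4 | h4)
            · exact h3 (by rw [← h4]; ring)
            · exact h2 h4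
      have e2 : backA (w ∘ Equiv.swap c (c+1)) L.toFinset = backA w (c :: L).toFinset := by
        funext p
        simp only [backA, List.mem_toFinset, List.mem_cons, Function.comp, decide_eq_decide]
        have g1 : c - 1 ∉ L := fun h => (hc _ h).2 (by ring)
        by_cases h1 : p = c
        · subst h1; simp [h.2, g1]
        · by_cases h2 : p = c + 1
          · subst h2; simp [h.1, h.2, h1]
          · rw [Equiv.swap_apply_of_ne_of_ne h1 h2]
            have : p - 1 ≠ c := fun h => h2 (by rw [← h]; ring)
            simp [h1, this]
      simp only [e1, e2]
      split_ifs with g1 g2 g3 g4 g5 <;> simp_all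
    · rw [if_neg h, if_neg]
      intro H
      apply h
      have := H c (by simp)
      refine ⟨this.2 ?_, this.1⟩
      simp only [List.mem_toFinset, List.mem_cons, not_or]
      exact ⟨fun h => zne hN (c - 1) (by rw [sub_add_cancel]; exact h.symm), fun h => (hc _ h).2 (by ring)⟩

open Classical in
theorem desc_apply {N : ℕ} [NeZero N] (hN : 3 ≤ N) (q : ℂ) (f : WSp ℂ N) (L : List (ZMod N))
    (hL : DescL L) (w : ZMod N → Bool) :
    ((L.map (uOp ℂ N q)).prod f) w = if condD w L.toFinset then
      (if (0 : ZMod N) ∈ L.toFinset then q else 1) * f (backD w L.toFinset) else 0 := by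
  induction L generalizing w with
  | nil =>
    have : backD w ∅ = w := by funext p; simp [backD]
    simp [condD, this]
  | cons c L ih =>
    have hL' := List.pairwise_cons.1 hL
    have hc : ∀ b ∈ L, c ≠ b ∧ b ≠ c + 1 := hL'.1
    have hc1 := zne hN c
    rw [List.map_cons, List.prod_cons, Module.End.mul_apply, uOp_apply']
    have hcL : c ∉ L := fun h => (hc c h).1 rfl
    have hcL1 : c + 1 ∉ L := fun h => (hc _ h).2 rfl
    by_cases h : w c = false ∧ w (c+1) = true
    · rw [if_pos h, ih hL'.2]
      have e1 : condD (w ∘ Equiv.swap c (c+1)) L.toFinset ↔ condD w (c :: L).toFinset := by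
        simp only [condD, List.mem_toFinset, List.mem_cons, Function.comp]
        have s1 : ∀ i ∈ L, Equiv.swap c (c+1) i = i := fun i hi =>
          Equiv.swap_apply_of_ne_of_ne (fun h => (hc i hi).1 h.symm)
            (fun h => (hc i hi).2 h)
        constructor
        · rintro H i (rfl | hi)
          · exact ⟨h.1, fun _ => h.2⟩
          · refine ⟨by have := (H i hi).1; rwa [s1 i hi] at this, ?_⟩
            intro h2
            push Not at h2
            have := (H i hi).2 h2.2
            rwa [Equiv.swap_apply_of_ne_of_ne h2.1 (fun h => (hc i hi).1 (add_right_cancel h).symm)] at this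
        · intro H i hi
          refine ⟨by rw [s1 i hi]; exact (H i (Or.inr hi)).1, fun h2 => ?_⟩
          by_cases h3 : i + 1 = c
          · rw [h3, Equiv.swap_apply_left]; exact h.2
          · rw [Equiv.swap_apply_of_ne_of_ne h3 (fun h => (hc i hi).1 (add_right_cancel h).symm)]
            apply (H i (Or.inr hi)).2
            rintro (h4 | h4)
            · exact h3 h4
            · exact h2 h4
      have e2 : backD (w ∘ Equiv.swap c (c+1)) L.toFinset = backD w (c :: L).toFinset := by
        funext p
        simp only [backD, List.mem_toFinset, List.mem_cons, Function.comp, decide_eq_decide]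
        by_cases h1 : p = c
        · subst h1
          have : p - 1 ≠ p := fun h => zne hN (p - 1) (by rw [sub_add_cancel]; exact h.symm)
          simp [h.2, this]
        · by_cases h2 : p = c + 1
          · subst h2; simp [h.1, hcL1]
          · rw [Equiv.swap_apply_of_ne_of_ne h1 h2]
            have : p - 1 ≠ c := fun h => h2 (by rw [← h]; ring)
            simp [h1, this]
      simp only [e1, e2]
      split_ifs with g1 g2 g3 g4 g5 <;> simp_all
    · rw [if_neg h, if_neg]
      intro H
      apply h
      have := H c (by simp)
      refine ⟨this.1, this.2 ?_⟩
      simp only [List.mem_toFinset, List.mem_cons, not_or]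
      exact ⟨hc1, hcL1⟩

theorem zgap_not_mem {N : ℕ} [NeZero N] (I : Finset (ZMod N)) (hI : I.card < N) : zgap I ∉ I := by
  have hne : ((Finset.univ \ I).image ZMod.val).Nonempty := by
    rw [Finset.image_nonempty, Finset.sdiff_nonempty]
    intro h
    have := Finset.card_le_card h
    rw [Finset.card_univ, ZMod.card] at this
    omega
  rw [zgap, dif_pos hne]
  have := Finset.min'_mem _ hne
  obtain ⟨a, ha, hb⟩ := Finset.mem_image.1 this
  rw [← hb, ZMod.natCast_zmod_val]
  exact (Finset.mem_sdiff.1 ha).2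

theorem prod_filter_aux {α A : Type*} [Monoid A] (u : α → A) (p : α → Prop) [DecidablePred p]
    (l : List α) : (l.map fun t => if p t then u t else 1).prod
      = ((l.filter (fun t => decide (p t))).map u).prod := by
  induction l with
  | nil => simp
  | cons a l ih =>
    by_cases h : p a <;> simp [h, ih]

theorem list_cast_aux {N : ℕ} (l : List ℕ) :
    (do let a ← l; pure (a : ZMod N) : List (ZMod N)) = l.map (fun a : ℕ => (a : ZMod N)) := by
  simp [List.map_eq_flatMap]

theorem asc_list {N : ℕ} [NeZero N] {A : Type*} [Monoid A] (u : ZMod N → A)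
    (I : Finset (ZMod N)) (hI : I.card < N) :
    ∃ L : List (ZMod N), AscL L ∧ L.toFinset = I ∧ cycProdAsc u I = (L.map u).prod := by
  have hg := zgap_not_mem I hI
  set g := zgap I with hgd
  refine ⟨((List.range N).map (fun t : ℕ => g + 1 + (t : ZMod N))).filter (fun c => decide (c ∈ I)), ?_, ?_, ?_⟩
  · unfold AscL
    rw [List.pairwise_filter, List.pairwise_map]
    refine List.Pairwise.imp_of_mem ?_ (List.pairwise_lt_range (n := N))
    intro a b ha hb hab h1 h2
    rw [List.mem_range] at ha hb
    constructor
    · intro h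
      have h := add_left_cancel h
      rw [ZMod.natCast_eq_natCast_iff'] at h
      rw [Nat.mod_eq_of_lt ha, Nat.mod_eq_of_lt hb] at h
      omega
    · intro h
      by_cases hb' : b + 1 = N
      · have : ((b : ZMod N)) + 1 = 0 := by
          have : ((b + 1 : ℕ) : ZMod N) = 0 := by rw [hb']; simp
          simpa using this
        have h3 : g + 1 + (b : ZMod N) = g := by
          linear_combination this
        simp [h3, hg] at h2
      · have h : ((a : ℕ) : ZMod N) = ((b + 1 : ℕ) : ZMod N) := by
          push_cast; linear_combination h
        rw [ZMod.natCast_eq_natCast_iff'] at h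
        rw [Nat.mod_eq_of_lt ha, Nat.mod_eq_of_lt (by omega)] at h
        omega
  · ext c
    simp only [List.mem_toFinset, List.mem_filter, List.mem_map, List.mem_range, decide_eq_true_eq]
    constructor
    · exact fun h => h.2
    · intro h
      exact ⟨⟨(c - (g + 1)).val, ZMod.val_lt _, by rw [ZMod.natCast_zmod_val]; ring⟩, h⟩
  · rw [← prod_filter_aux, List.map_map, cycProdAsc]
    rw [list_cast_aux, List.map_map]
    rfl

theorem desc_list {N : ℕ} [NeZero N] {A : Type*} [Monoid A] (u : ZMod N → A)
    (I : Finset (ZMod N)) (hI : I.card < N) :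
    ∃ L : List (ZMod N), DescL L ∧ L.toFinset = I ∧ cycProdDesc u I = (L.map u).prod := by
  have hg := zgap_not_mem I hI
  set g := zgap I with hgd
  refine ⟨((List.range N).map (fun t : ℕ => g - 1 - (t : ZMod N))).filter (fun c => decide (c ∈ I)), ?_, ?_, ?_⟩
  · unfold DescL
    rw [List.pairwise_filter, List.pairwise_map]
    refine List.Pairwise.imp_of_mem ?_ (List.pairwise_lt_range (n := N))
    intro a b ha hb hab h1 h2
    rw [List.mem_range] at ha hb
    constructor
    · intro h
      have h := sub_right_injective h
      rw [ZMod.natCast_eq_natCast_iff'] at h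
      rw [Nat.mod_eq_of_lt ha, Nat.mod_eq_of_lt hb] at h
      omega
    · intro h
      by_cases hb' : b + 1 = N
      · have : ((b : ZMod N)) + 1 = 0 := by
          have : ((b + 1 : ℕ) : ZMod N) = 0 := by rw [hb']; simp
          simpa using this
        have h3 : g - 1 - (b : ZMod N) = g := by
          linear_combination -this
        simp [h3, hg] at h2
      · have h : ((a : ℕ) : ZMod N) = ((b + 1 : ℕ) : ZMod N) := by
          push_cast; linear_combination h
        rw [ZMod.natCast_eq_natCast_iff'] at h
        rw [Nat.mod_eq_of_lt ha, Nat.mod_eq_of_lt (by omega)] at h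
        omega
  · ext c
    simp only [List.mem_toFinset, List.mem_filter, List.mem_map, List.mem_range, decide_eq_true_eq]
    constructor
    · exact fun h => h.2
    · intro h
      exact ⟨⟨(g - 1 - c).val, ZMod.val_lt _, by rw [ZMod.natCast_zmod_val]; ring⟩, h⟩
  · rw [← prod_filter_aux, List.map_map, cycProdDesc]
    rw [list_cast_aux, List.map_map]
    rfl

theorem asc_unique {N : ℕ} [NeZero N] (hN : 3 ≤ N) (q : ℂ) (L L' : List (ZMod N))
    (h : AscL L) (h' : AscL L') (e : L.toFinset = L'.toFinset) :
    (L.map (uOp ℂ N q)).prod = (L'.map (uOp ℂ N q)).prod := by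
  apply LinearMap.ext; intro f
  ext w
  rw [asc_apply hN q f L h, asc_apply hN q f L' h', e]

theorem desc_unique {N : ℕ} [NeZero N] (hN : 3 ≤ N) (q : ℂ) (L L' : List (ZMod N))
    (h : DescL L) (h' : DescL L') (e : L.toFinset = L'.toFinset) :
    (L.map (uOp ℂ N q)).prod = (L'.map (uOp ℂ N q)).prod := by
  apply LinearMap.ext; intro f
  ext w
  rw [desc_apply hN q f L h, desc_apply hN q f L' h', e]

theorem asc_insert {N : ℕ} [NeZero N] (hN : 3 ≤ N) (q : ℂ) (I : Finset (ZMod N)) (c : ZMod N)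
    (h1 : c ∉ I) (h2 : c + 1 ∉ I) (hI : (insert c I).card < N) :
    cycProdAsc (uOp ℂ N q) (insert c I) = cycProdAsc (uOp ℂ N q) I * uOp ℂ N q c := by
  obtain ⟨L, a, b, d⟩ := asc_list (uOp ℂ N q) (insert c I) hI
  obtain ⟨L', a', b', d'⟩ := asc_list (uOp ℂ N q) I (by rw [Finset.card_insert_of_notMem h1] at hI; omega)
  rw [d, d', asc_unique hN q L (L' ++ [c]) a ?_ ?_]
  · simp
  · unfold AscL
    rw [List.pairwise_append]
    refine ⟨a', by simp, ?_⟩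
    intro x hx y hy
    rw [List.mem_singleton] at hy
    subst hy
    rw [← List.mem_toFinset, b'] at hx
    exact ⟨fun h => h1 (h ▸ hx), fun h => h2 (h ▸ hx)⟩
  · rw [b]; ext x; simp [← b']

theorem desc_insert {N : ℕ} [NeZero N] (hN : 3 ≤ N) (q : ℂ) (I : Finset (ZMod N)) (c : ZMod N)
    (h1 : c ∉ I) (h2 : c + 1 ∉ I) (hI : (insert c I).card < N) :
    cycProdDesc (uOp ℂ N q) (insert c I) = uOp ℂ N q c * cycProdDesc (uOp ℂ N q) I := by
  obtain ⟨L, a, b, d⟩ := desc_list (uOp ℂ N q) (insert c I) hI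
  obtain ⟨L', a', b', d'⟩ := desc_list (uOp ℂ N q) I (by rw [Finset.card_insert_of_notMem h1] at hI; omega)
  rw [d, d', desc_unique hN q L (c :: L') a ?_ ?_]
  · simp
  · unfold DescL
    rw [List.pairwise_cons]
    refine ⟨?_, a'⟩
    intro x hx
    rw [← List.mem_toFinset, b'] at hx
    exact ⟨fun h => h1 (h ▸ hx), fun h => h2 (h ▸ hx)⟩
  · rw [b]; ext x; simp [← b']

theorem exists_top_s16 {N : ℕ} [NeZero N] (K : Finset (ZMod N)) (h0 : K.Nonempty) (h1 : K.card < N) :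
    ∃ c ∈ K, c + 1 ∉ K := by
  by_contra! H
  obtain ⟨a, ha⟩ := h0
  have : ∀ t : ℕ, a + (t : ZMod N) ∈ K := by
    intro t
    induction t with
    | zero => simpa
    | succ t ih => have := H _ ih; push_cast; rwa [← add_assoc]
  have : K = Finset.univ := by
    ext c
    have := this (c - a).val
    rw [ZMod.natCast_zmod_val] at this
    simpa using this
  rw [this, Finset.card_univ, ZMod.card] at h1
  omega

theorem nc_identity {N : ℕ} [NeZero N] (hN : 3 ≤ N) (q : ℂ) (r : ℕ) (hr : 1 ≤ r) (hr' : r ≤ N - 1) :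
    ∑ p ∈ Finset.univ.filter
        (fun p : Finset (ZMod N) × Finset (ZMod N) => p.1.card + p.2.card = r),
      ((-1 : ℂ) ^ p.1.card) • (cycProdAsc (uOp ℂ N q) p.1 * cycProdDesc (uOp ℂ N q) p.2) = 0 := by
  classical
  have htop : ∀ K : Finset (ZMod N), ∃ c, (K.Nonempty → K.card < N → c ∈ K ∧ c + 1 ∉ K) := by
    intro K
    by_cases h : K.Nonempty ∧ K.card < N
    · obtain ⟨c, hc⟩ := exists_top_s16 K h.1 h.2
      exact ⟨c, fun _ _ => hc⟩
    · exact ⟨0, fun a b => absurd ⟨a, b⟩ h⟩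
  choose top htop using htop
  have htop' : ∀ p : Finset (ZMod N) × Finset (ZMod N), p.1.card + p.2.card = r →
      top (p.1 ∪ p.2) ∈ p.1 ∪ p.2 ∧ top (p.1 ∪ p.2) + 1 ∉ p.1 ∪ p.2 := by
    intro p hp
    apply htop
    · rw [← Finset.card_pos]
      by_contra h
      have a1 := Finset.card_le_card (Finset.subset_union_left (s₁ := p.1) (s₂ := p.2))
      have a2 := Finset.card_le_card (Finset.subset_union_right (s₁ := p.1) (s₂ := p.2))
      omega
    · have := Finset.card_union_le p.1 p.2
      omega
  let g : Finset (ZMod N) × Finset (ZMod N) → Finset (ZMod N) × Finset (ZMod N) := fun p =>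
    if top (p.1 ∪ p.2) ∈ p.1 then
      if top (p.1 ∪ p.2) ∈ p.2 then p
      else (p.1.erase (top (p.1 ∪ p.2)), insert (top (p.1 ∪ p.2)) p.2)
    else (insert (top (p.1 ∪ p.2)) p.1, p.2.erase (top (p.1 ∪ p.2)))
  -- moving c from left to right
  have move : ∀ (I J : Finset (ZMod N)) (c : ZMod N), c ∉ I → c ∉ J → c + 1 ∉ I → c + 1 ∉ J →
      (insert c I).card < N → (insert c J).card < N →
      cycProdAsc (uOp ℂ N q) (insert c I) * cycProdDesc (uOp ℂ N q) J =
      cycProdAsc (uOp ℂ N q) I * cycProdDesc (uOp ℂ N q) (insert c J) := by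
    intro I J c h1 h2 h3 h4 h5 h6
    rw [asc_insert hN q I c h1 h3 h5, desc_insert hN q J c h2 h4 h6, mul_assoc]
  have both : ∀ (I J : Finset (ZMod N)) (c : ZMod N), c ∈ I → c ∈ J → c + 1 ∉ I → c + 1 ∉ J →
      I.card < N → J.card < N →
      cycProdAsc (uOp ℂ N q) I * cycProdDesc (uOp ℂ N q) J = 0 := by
    intro I J c h1 h2 h3 h4 h5 h6
    have e1 := asc_insert hN q (I.erase c) c (by simp) (by simp [h3]) (by rwa [Finset.insert_erase h1])
    have e2 := desc_insert hN q (J.erase c) c (by simp) (by simp [h4]) (by rwa [Finset.insert_erase h2])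
    rw [Finset.insert_erase h1] at e1
    rw [Finset.insert_erase h2] at e2
    rw [e1, e2, mul_assoc, ← mul_assoc (uOp ℂ N q c), uOp_sq]
    simp
  refine Finset.sum_involution (fun p _ => g p) ?_ ?_ ?_ ?_
  · rintro ⟨I, J⟩ hp
    simp only [Finset.mem_filter, Finset.mem_univ, true_and] at hp
    have ht := htop' (I, J) hp
    simp only [Finset.mem_union, not_or] at ht
    simp only [g]
    set c := top (I ∪ J)
    by_cases h1 : c ∈ I
    · by_cases h2 : c ∈ J
      · simp only [if_pos h1, if_pos h2]
        rw [both I J c h1 h2 ht.2.1 ht.2.2 (by omega) (by omega)]; simp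
      · simp only [if_pos h1, if_neg h2]
        have hc := Finset.card_erase_add_one h1
        have := move (I.erase c) J c (by simp) h2 (by simp [ht.2.1]) ht.2.2
          (by rw [Finset.insert_erase h1]; omega) (by rw [Finset.card_insert_of_notMem h2]; omega)
        rw [Finset.insert_erase h1] at this
        rw [← this, ← add_smul, ← hc, pow_succ]; simp
    · have h2 : c ∈ J := by tauto
      simp only [if_neg h1]
      have hc := Finset.card_erase_add_one h2
      have := move I (J.erase c) c h1 (by simp) ht.2.1 (by simp [ht.2.2])
          (by rw [Finset.card_insert_of_notMem h1]; omega) (by rw [Finset.insert_erase h2]; omega)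
      rw [Finset.insert_erase h2] at this
      rw [this, ← add_smul, Finset.card_insert_of_notMem h1, pow_succ]; simp
  · rintro ⟨I, J⟩ hp hf
    simp only [Finset.mem_filter, Finset.mem_univ, true_and] at hp
    have ht := htop' (I, J) hp
    simp only [Finset.mem_union, not_or] at ht
    simp only [g]
    set c := top (I ∪ J)
    by_cases h1 : c ∈ I
    · by_cases h2 : c ∈ J
      · exfalso; apply hf
        rw [both I J c h1 h2 ht.2.1 ht.2.2 (by omega) (by omega)]; simp
      · simp only [if_pos h1, if_neg h2]
        intro h
        apply h2
        rw [← (Prod.mk.inj h).2]; simp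
    · simp only [if_neg h1]
      intro h
      apply h1
      rw [← (Prod.mk.inj h).1]; simp
  · rintro ⟨I, J⟩ hp
    simp only [Finset.mem_filter, Finset.mem_univ, true_and] at hp ⊢
    have ht := htop' (I, J) hp
    simp only [Finset.mem_union, not_or] at ht
    simp only [g]
    set c := top (I ∪ J)
    by_cases h1 : c ∈ I
    · by_cases h2 : c ∈ J
      · simp only [if_pos h1, if_pos h2]; exact hp
      · simp only [if_pos h1, if_neg h2]
        have hc := Finset.card_erase_add_one h1
        rw [Finset.card_insert_of_notMem h2]; omega
    · have h2 : c ∈ J := by tauto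
      simp only [if_neg h1]
      have hc := Finset.card_erase_add_one h2
      rw [Finset.card_insert_of_notMem h1]; omega
  · rintro ⟨I, J⟩ hp
    simp only [Finset.mem_filter, Finset.mem_univ, true_and] at hp
    have ht := htop' (I, J) hp
    simp only [Finset.mem_union, not_or] at ht
    simp only [g]
    by_cases h1 : top (I ∪ J) ∈ I
    · by_cases h2 : top (I ∪ J) ∈ J
      · simp only [if_pos h1, if_pos h2]
      · simp only [if_pos h1, if_neg h2]
        have e : I.erase (top (I ∪ J)) ∪ insert (top (I ∪ J)) J = I ∪ J := by
          ext x; by_cases hx : x = top (I ∪ J)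
          · simp [hx, h1]
          · simp [hx]
        simp only [e]
        rw [if_neg (by simp)]
        rw [Finset.insert_erase h1, Finset.erase_insert h2]
    · have h2 : top (I ∪ J) ∈ J := by tauto
      simp only [if_neg h1]
      have e : insert (top (I ∪ J)) I ∪ J.erase (top (I ∪ J)) = I ∪ J := by
        ext x; by_cases hx : x = top (I ∪ J)
        · simp [hx, h2]
        · simp [hx]
      simp only [e]
      rw [if_pos (by simp), if_neg (by simp), Finset.insert_erase h2, Finset.erase_insert h1]

theorem cyc_empty {N : ℕ} [NeZero N] (q : ℂ) :
    cycProdAsc (uOp ℂ N q) ∅ = 1 ∧ cycProdDesc (uOp ℂ N q) ∅ = 1 := by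
  constructor
  · simp [cycProdAsc]
  · simp [cycProdDesc]

theorem eU_eq {N : ℕ} [NeZero N] (q : ℂ) (a : ℕ) (ha : a ≤ N - 1) :
    eUInt ℂ N q (a : ℤ) = ∑ I ∈ Finset.powersetCard a (Finset.univ : Finset (ZMod N)),
      cycProdAsc (uOp ℂ N q) I := by
  have hN := NeZero.pos N
  unfold eUInt
  by_cases h : a = 0
  · subst h; simp [(cyc_empty q).1]
  · rw [if_neg (by exact_mod_cast h), if_pos (by omega)]; simp

theorem nc_identity2 {N : ℕ} [NeZero N] (hN : 3 ≤ N) (q : ℂ) (r : ℕ) (hr : 1 ≤ r) (hr' : r ≤ N - 1) :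
    ∑ p ∈ Finset.HasAntidiagonal.antidiagonal r, ((-1 : ℂ) ^ p.1) • (eUInt ℂ N q (p.1 : ℤ) * hUOp ℂ N q p.2) = 0 := by
  rw [← nc_identity hN q r hr hr']
  rw [← Finset.sum_fiberwise_of_maps_to (t := Finset.HasAntidiagonal.antidiagonal r)
    (g := fun p : Finset (ZMod N) × Finset (ZMod N) => (p.1.card, p.2.card)) (by simp)]
  refine Finset.sum_congr rfl ?_
  rintro ⟨a, b⟩ hab
  rw [Finset.HasAntidiagonal.mem_antidiagonal] at hab
  simp only at hab ⊢
  rw [eU_eq q a (by omega), hUOp, Finset.sum_mul_sum, ← Finset.sum_product', Finset.smul_sum]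
  refine Finset.sum_congr ?_ ?_
  · ext ⟨I, J⟩
    simp [Finset.mem_powersetCard]
    intro h1 h2; omega
  · rintro ⟨I, J⟩ h
    simp at h
    simp [h.2.1]

theorem hC_neg {m : ℕ} (x : Fin m → ℂ) (r : ℤ) (h : r < 0) : hC x r = 0 := by
  rw [hC, if_neg (by omega)]

theorem hC_gen {m : ℕ} (x : Fin m → ℂ) :
    (PowerSeries.mk fun r : ℕ => hC x (r : ℤ)) = ∏ i, PowerSeries.mk fun r : ℕ => x i ^ r := by
  ext r
  rw [PowerSeries.coeff_mk, PowerSeries.coeff_prod, hC, if_pos (by omega)]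
  simp only [PowerSeries.coeff_mk, Int.toNat_natCast]
  refine Finset.sum_bij' (fun p _ => Finsupp.equivFunOnFinite.symm p) (fun l _ => (l : Fin m → ℕ))
    ?_ ?_ ?_ ?_ ?_
  · intro p hp
    simp only [Finset.mem_filter, Fintype.mem_piFinset] at hp
    simp [Finset.mem_finsuppAntidiag, hp.2]
  · intro l hl
    simp only [Finset.mem_finsuppAntidiag] at hl
    simp only [Finset.mem_filter, Fintype.mem_piFinset, Finset.mem_range]
    refine ⟨fun i => ?_, hl.1⟩
    have := Finset.single_le_sum (f := fun i => l i) (fun _ _ => Nat.zero_le _) (Finset.mem_univ i)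
    have h2 := hl.1
    change ∑ i, l i = r at h2
    omega
  · intro p hp; rfl
  · intro l hl; ext i; rfl
  · intro p hp; rfl

theorem geom_inv (a : ℂ) : (PowerSeries.mk fun r : ℕ => a ^ r) * (1 - PowerSeries.C a * PowerSeries.X) = 1 := by
  ext r
  rw [mul_sub, mul_one, map_sub, PowerSeries.coeff_mk, ← mul_assoc]
  cases r with
  | zero => simp
  | succ r =>
    rw [PowerSeries.coeff_succ_mul_X, mul_comm, PowerSeries.coeff_C_mul, PowerSeries.coeff_mk]
    simp [PowerSeries.coeff_one, pow_succ, mul_comm]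

theorem hC_gen_mul {m : ℕ} (x : Fin m → ℂ) :
    (PowerSeries.mk fun r : ℕ => hC x (r : ℤ)) * ∏ i, (1 - PowerSeries.C (x i) * PowerSeries.X) = 1 := by
  rw [hC_gen, ← Finset.prod_mul_distrib]
  simp [geom_inv]

def Pl {m : ℕ} (x : Fin m → ℂ) (l : Fin m) : Polynomial ℂ :=
  ∏ i ∈ Finset.univ.erase l, (1 - Polynomial.C (x i) * Polynomial.X)

theorem Pl_coeff {m : ℕ} (x : Fin m → ℂ) (l : Fin m) (j : ℕ) (hj : m ≤ j) : (Pl x l).coeff j = 0 := by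
  apply Polynomial.coeff_eq_zero_of_natDegree_lt
  refine lt_of_le_of_lt (Polynomial.natDegree_prod_le _ _) ?_
  refine lt_of_le_of_lt (Finset.sum_le_card_nsmul _ _ 1 ?_) ?_
  · intro i _
    refine (Polynomial.natDegree_sub_le _ _).trans ?_
    simp only [Polynomial.natDegree_one, zero_le, sup_of_le_right]
    exact (Polynomial.natDegree_C_mul_le _ _).trans (by simp)
  · have := l.2
    simp
    omega

theorem Pl_gen {m : ℕ} (x : Fin m → ℂ) (l : Fin m) :
    (PowerSeries.mk fun r : ℕ => hC x (r : ℤ)) * (Pl x l : PowerSeries ℂ) =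
      PowerSeries.mk fun r : ℕ => x l ^ r := by
  have e1 : (Pl x l : PowerSeries ℂ) = ∏ i ∈ Finset.univ.erase l, (1 - PowerSeries.C (x i) * PowerSeries.X) := by
    rw [Pl, ← Polynomial.coeToPowerSeries.ringHom_apply, map_prod]
    simp
  have h1 := hC_gen_mul x
  rw [← Finset.mul_prod_erase _ _ (Finset.mem_univ l), ← e1] at h1
  have h2 := geom_inv (x l)
  calc _ = (PowerSeries.mk fun r : ℕ => hC x (r : ℤ)) * (Pl x l : PowerSeries ℂ) *
      ((PowerSeries.mk fun r : ℕ => x l ^ r) * (1 - PowerSeries.C (x l) * PowerSeries.X)) := by rw [h2, mul_one]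
    _ = (PowerSeries.mk fun r : ℕ => x l ^ r) * ((PowerSeries.mk fun r : ℕ => hC x (r : ℤ)) *
      ((1 - PowerSeries.C (x l) * PowerSeries.X) * (Pl x l : PowerSeries ℂ))) := by ring
    _ = _ := by rw [h1, mul_one]

theorem h_coeff_sum {m : ℕ} (x : Fin m → ℂ) (l : Fin m) (a : ℕ) :
    ∑ j : Fin m, hC x ((a : ℤ) - (j : ℕ)) * (Pl x l).coeff j = x l ^ a := by
  have h := congrArg (PowerSeries.coeff a) (Pl_gen x l)
  rw [PowerSeries.coeff_mk, PowerSeries.coeff_mul,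
    Finset.Nat.sum_antidiagonal_eq_sum_range_succ_mk] at h
  simp only [PowerSeries.coeff_mk, Polynomial.coeff_coe] at h
  rw [← h, ← Finset.sum_range_reflect]
  rw [Fin.sum_univ_eq_sum_range (fun j => hC x ((a : ℤ) - (j : ℕ)) * (Pl x l).coeff j)]
  have e : ∀ j ∈ Finset.range (a + 1), hC x ((a + 1 - 1 - j : ℕ) : ℤ) * (Pl x l).coeff (a - (a + 1 - 1 - j)) =
      hC x ((a : ℤ) - (j : ℕ)) * (Pl x l).coeff j := by
    intro j hj
    rw [Finset.mem_range] at hj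
    congr 2
    · omega
    · omega
  rw [Finset.sum_congr rfl e]
  rcases le_total m (a + 1) with h1 | h1
  · apply Finset.sum_subset
    · simpa using h1
    · intro j _ hj
      rw [Pl_coeff x l j (by simpa using hj), mul_zero]
  · symm
    apply Finset.sum_subset
    · simpa using h1
    · intro j _ hj
      rw [hC_neg, zero_mul]
      simp at hj; omega

/-- alternant -/
def DD {k : ℕ} (x : Fin k → ℂ) (l : Fin k → ℕ) : ℂ :=
  (Matrix.of fun j i : Fin k => x j ^ l i).det

def Delta {k : ℕ} (x : Fin k → ℂ) : ℂ :=
  (Matrix.of fun j l : Fin k => x l * (Pl x l).coeff j).det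

theorem schur_Delta {k : ℕ} (x : Fin k → ℂ) (lam : Fin k → ℕ) :
    schurC x lam * Delta x = DD x (fun i => lam i.rev + (i : ℕ) + 1) := by
  rw [schurC, Delta, DD, ← Matrix.det_submatrix_equiv_self (Fin.revPerm), ← Matrix.det_mul,
    ← Matrix.det_transpose]
  congr 1
  ext j i
  rw [Matrix.transpose_apply, Matrix.mul_apply]
  simp only [Matrix.submatrix_apply, Matrix.of_apply, Fin.revPerm_apply]
  have := h_coeff_sum x j (lam i.rev + i)
  rw [pow_succ, ← this, Finset.sum_mul]
  refine Finset.sum_congr rfl ?_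
  intro l _
  have : (lam i.rev : ℤ) - (i.rev : ℕ) + (l.rev : ℕ) = ((lam i.rev + i : ℕ) : ℤ) - (l : ℕ) := by
    rw [Fin.val_rev, Fin.val_rev]
    omega
  rw [this]; ring

theorem Delta_ne {k : ℕ} (x : Fin k → ℂ) (hx : Function.Injective x) (h0 : ∀ i, x i ≠ 0) :
    Delta x ≠ 0 := by
  intro h
  have := schur_Delta x (fun _ => 0)
  rw [h, mul_zero] at this
  have e : DD x (fun i => (0 : ℕ) + (i : ℕ) + 1) = (∏ i, x i) * (Matrix.vandermonde x).det := by
    rw [← Matrix.det_mul_column, DD]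
    congr 1
    ext j i
    simp [Matrix.vandermonde, pow_succ, mul_comm]
  rw [e] at this
  exact mul_ne_zero (Finset.prod_ne_zero_iff.2 fun i _ => h0 i)
    (Matrix.det_vandermonde_ne_zero_iff.2 hx) this.symm

theorem eh_identity {k : ℕ} (y : Fin k → ℂ) (r : ℕ) (hr : 1 ≤ r) :
    ∑ p ∈ Finset.HasAntidiagonal.antidiagonal r, (-1 : ℂ) ^ p.1 * (eC y (p.1 : ℤ) * hC y (p.2 : ℤ)) = 0 := by
  have h := congrArg (PowerSeries.coeff r) (hC_gen_mul y)
  rw [mul_comm, PowerSeries.coeff_mul, PowerSeries.coeff_one, if_neg (by omega)] at h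
  rw [← h]
  refine Finset.sum_congr rfl ?_
  rintro ⟨a, b⟩ _
  simp only [PowerSeries.coeff_mk]
  rw [← mul_assoc]
  congr 1
  have e : ∏ i, (1 - PowerSeries.C (y i) * PowerSeries.X) = ∑ t ∈ (Finset.univ : Finset (Fin k)).powerset,
      PowerSeries.monomial t.card ((-1) ^ t.card * ∏ i ∈ t, y i) := by
    simp only [sub_eq_add_neg]
    rw [Finset.prod_one_add]
    refine Finset.sum_congr rfl fun t _ => ?_
    rw [Finset.prod_neg, Finset.prod_mul_distrib, Finset.prod_const, ← map_prod,
      PowerSeries.monomial_eq_C_mul_X_pow, map_mul]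
    simp [mul_assoc]
  rw [e, map_sum]
  simp only [PowerSeries.coeff_monomial]
  rw [← Finset.sum_filter, eC, if_pos (by omega), Finset.mul_sum]
  refine Finset.sum_congr ?_ ?_
  · ext t; simp [eq_comm]
  · intro t ht
    simp at ht
    simp [ht]

theorem hC_zero {k : ℕ} (y : Fin k → ℂ) : hC y 0 = 1 := by
  have h := congrArg (PowerSeries.coeff 0) (hC_gen y)
  rw [PowerSeries.coeff_mk] at h
  simpa [PowerSeries.coeff_prod] using h

/-- word of a position tuple -/
def wd (N : ℕ) {k : ℕ} (m : Fin k → ℕ) : ZMod N → Bool :=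
  fun p => decide (∃ i : Fin k, p = ((m i : ℕ) : ZMod N))

theorem DD_sum {k : ℕ} (x y : Fin k → ℂ) (hxy : ∀ i, x i * y i = 1) (l : Fin k → ℕ)
    (hl : ∀ i, 1 ≤ l i) (r : ℕ) :
    ∑ S ∈ Finset.powersetCard r (Finset.univ : Finset (Fin k)),
      DD x (fun i => if i ∈ S then l i - 1 else l i) = eC y (r : ℤ) * DD x l := by
  simp only [DD, Matrix.det_apply', Matrix.of_apply]
  rw [Finset.sum_comm, Finset.mul_sum]
  refine Finset.sum_congr rfl fun σ _ => ?_
  rw [← Finset.mul_sum, mul_left_comm]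
  congr 1
  have e : ∀ S : Finset (Fin k), ∏ i, x (σ i) ^ (if i ∈ S then l i - 1 else l i) =
      (∏ i ∈ S, y (σ i)) * ∏ i, x (σ i) ^ l i := by
    intro S
    have : ∏ i ∈ S, y (σ i) = ∏ i, if i ∈ S then y (σ i) else 1 := by
      rw [Finset.prod_ite_mem]; simp
    rw [this, ← Finset.prod_mul_distrib]
    refine Finset.prod_congr rfl fun i _ => ?_
    split_ifs
    · obtain ⟨t, ht⟩ := Nat.exists_eq_add_of_le (hl i)
      rw [ht, Nat.add_sub_cancel_left, pow_add, pow_one, ← mul_assoc, mul_comm (y _), hxy, one_mul]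
    · rw [one_mul]
  simp only [e]
  rw [← Finset.sum_mul, eC, if_pos (by omega), Int.toNat_natCast]
  congr 1
  have hu : (Finset.univ : Finset (Fin k)) = Finset.univ.map σ.toEmbedding := by simp
  conv_rhs => rw [hu, Finset.powersetCard_map, Finset.sum_map]
  refine Finset.sum_congr rfl fun S _ => ?_
  simp [Finset.prod_map]

theorem zcast_inj {N : ℕ} {a b : ℕ} (ha : 1 ≤ a) (ha' : a ≤ N) (hb : 1 ≤ b) (hb' : b ≤ N)
    (h : (a : ZMod N) = (b : ZMod N)) : a = b := by
  rw [ZMod.natCast_eq_natCast_iff'] at h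
  rcases Nat.lt_or_eq_of_le ha' with h1 | h1 <;> rcases Nat.lt_or_eq_of_le hb' with h2 | h2
  · rwa [Nat.mod_eq_of_lt h1, Nat.mod_eq_of_lt h2] at h
  · rw [Nat.mod_eq_of_lt h1, h2, Nat.mod_self] at h; omega
  · rw [Nat.mod_eq_of_lt h2, h1, Nat.mod_self] at h; omega
  · omega

theorem wd_inj {N k : ℕ} (l l' : Fin k → ℕ) (h : StrictMono l) (h' : StrictMono l')
    (b : ∀ i, 1 ≤ l i ∧ l i ≤ N) (b' : ∀ i, 1 ≤ l' i ∧ l' i ≤ N) (e : wd N l = wd N l') : l = l' := by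
  rw [← StrictMono.range_inj h h']
  have key : ∀ l l' : Fin k → ℕ, (∀ i, 1 ≤ l i ∧ l i ≤ N) → (∀ i, 1 ≤ l' i ∧ l' i ≤ N) → wd N l = wd N l' →
      Set.range l ⊆ Set.range l' := by
    rintro l l' b b' e _ ⟨i, rfl⟩
    have := congrFun e (l i)
    simp only [wd, decide_eq_decide] at this
    obtain ⟨j, hj⟩ := this.1 ⟨i, rfl⟩
    exact ⟨j, (zcast_inj (b i).1 (b i).2 (b' j).1 (b' j).2 hj).symm⟩
  exact Set.Subset.antisymm (key _ _ b b' e) (key _ _ b' b e.symm)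

theorem fB_apply (n k : ℕ) [NeZero (n + k)] (y : Fin k → ℂ) (w : ZMod (n + k) → Bool) :
    fermiBethe n k y w = ∑ σ : PartBox k n, if wd (n + k) (fun i => partVal σ i.rev + (i : ℕ) + 1) = w
      then schurC (fun i => (y i)⁻¹) (partVal σ) else 0 := by
  rw [fermiBethe, Finsupp.finsetSum_apply]
  refine Finset.sum_congr rfl fun σ _ => ?_
  rw [Finsupp.single_apply]
  rfl

theorem pos_mono {n k : ℕ} (σ : PartBox k n) :
    StrictMono (fun i : Fin k => partVal σ i.rev + (i : ℕ) + 1) := by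
  intro i j hij
  have h := σ.2 j.rev i.rev (Fin.rev_le_rev.2 hij.le)
  change (σ.1 i.rev : ℕ) + (i : ℕ) + 1 < (σ.1 j.rev : ℕ) + (j : ℕ) + 1
  have : (i : ℕ) < j := hij
  omega

theorem pos_bd {n k : ℕ} (σ : PartBox k n) (i : Fin k) :
    1 ≤ partVal σ i.rev + (i : ℕ) + 1 ∧ partVal σ i.rev + (i : ℕ) + 1 ≤ n + k := by
  have := (σ.1 i.rev).2
  have := i.2
  unfold partVal
  omega

theorem strict_gap {k : ℕ} (l : Fin k → ℕ) (h : StrictMono l) (i j : Fin k) (hij : i ≤ j) :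
    l i + ((j : ℕ) - i) ≤ l j := by
  obtain ⟨i, hi⟩ := i
  obtain ⟨j, hj⟩ := j
  simp only [Fin.mk_le_mk] at hij
  induction j, hij using Nat.le_induction with
  | base => simp
  | succ j hij ih =>
    have h1 := ih (by omega)
    have h2 : l ⟨j, by omega⟩ < l ⟨j + 1, hj⟩ := h (by simp)
    simp only at h1 ⊢
    omega

theorem fB_wd (n k : ℕ) [NeZero (n + k)] (y : Fin k → ℂ) (l : Fin k → ℕ) (h : StrictMono l)
    (b : ∀ i, 1 ≤ l i ∧ l i ≤ n + k) :
    fermiBethe n k y (wd (n + k) l) * Delta (fun i => (y i)⁻¹) = DD (fun i => (y i)⁻¹) l := by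
  have hlow : ∀ i : Fin k, (i : ℕ) + 1 ≤ l i := by
    intro i
    have := strict_gap l h ⟨0, by have := i.2; omega⟩ i (by simp [Fin.le_def])
    have := (b ⟨0, by have := i.2; omega⟩).1
    simp only at *
    omega
  have hup : ∀ i : Fin k, l i ≤ n + (i : ℕ) + 1 := by
    intro i
    have := strict_gap l h i ⟨k - 1, by have := i.2; omega⟩ (by simp [Fin.le_def]; have := i.2; omega)
    have := (b ⟨k - 1, by have := i.2; omega⟩).2
    have := i.2
    simp only at *
    omega
  let σ : PartBox k n := ⟨fun i => ⟨l i.rev - (i.rev : ℕ) - 1, by have := hup i.rev; omega⟩, by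
    intro i j hij
    have h1 := Fin.rev_le_rev.2 hij
    have := strict_gap l h _ _ h1
    have h2 : (j.rev : ℕ) ≤ (i.rev : ℕ) := h1
    simp only
    omega⟩
  have hσ : (fun i : Fin k => partVal σ i.rev + (i : ℕ) + 1) = l := by
    funext i
    have := hlow i
    simp only [partVal, σ, Fin.rev_rev]
    omega
  rw [fB_apply, Finset.sum_eq_single σ, if_pos (by rw [hσ]), schur_Delta, hσ]
  · intro τ _ hτ
    rw [if_neg]
    intro e
    apply hτ
    have := wd_inj _ _ (pos_mono τ) h (pos_bd τ) b e
    rw [← hσ] at this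
    apply Subtype.ext
    funext i
    have := congrFun this i.rev
    simp only [Fin.rev_rev, partVal] at this
    apply Fin.ext
    omega
  · simp

/-- Extended range: position 0 allowed. -/
theorem fB_wd_ext (n k : ℕ) [NeZero (n + k)] (hk : 1 ≤ k) (y : Fin k → ℂ) (hy0 : ∀ i, y i ≠ 0)
    (hpow : ∀ i j, y i ^ (n + k) = y j ^ (n + k)) (l : Fin k → ℕ) (h : StrictMono l)
    (b : ∀ i, l i ≤ n + k) (hb : ∀ i j, l i = 0 → l j ≠ n + k) :
    (if ∃ i, l i = 0 then (-1) ^ (k - 1) * y ⟨0, hk⟩ ^ (n + k) else 1) *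
      fermiBethe n k y (wd (n + k) l) * Delta (fun i => (y i)⁻¹) = DD (fun i => (y i)⁻¹) l := by
  by_cases h0 : ∃ i, l i = 0
  · rw [if_pos h0]
    obtain ⟨k, rfl⟩ : ∃ k', k = k' + 1 := ⟨k - 1, by omega⟩
    obtain ⟨i0, hi0⟩ := h0
    have hl0 : l 0 = 0 := by
      have := h.monotone (Fin.zero_le i0); omega
    set m : Fin (k + 1) → ℕ := fun i => Function.update l 0 (n + (k + 1)) (finRotate (k + 1) i) with hm
    have hmlast : m (Fin.last k) = n + (k + 1) := by simp [hm]
    have hmne : ∀ i : Fin k, m i.castSucc = l i.succ := by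
      intro i
      have : finRotate (k + 1) i.castSucc = i.succ := by
        rw [finRotate_apply]; simp
      rw [hm]; simp only [this]
      rw [Function.update_of_ne (Fin.succ_ne_zero i)]
    have hlt : ∀ i, l i < n + (k + 1) := fun i => lt_of_le_of_ne (b i) (hb 0 i hl0)
    have hms : StrictMono m := by
      intro i j hij
      induction i using Fin.lastCases with
      | last => exact absurd hij (not_lt.2 (Fin.le_last j))
      | cast i =>
        induction j using Fin.lastCases with
        | last => rw [hmlast, hmne]; exact hlt _
        | cast j => rw [hmne, hmne]; exact h (by simpa using hij)
    have hmb : ∀ i, 1 ≤ m i ∧ m i ≤ n + (k + 1) := by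
      intro i
      induction i using Fin.lastCases with
      | last => rw [hmlast]; omega
      | cast i =>
        rw [hmne]
        have : l 0 < l i.succ := h (Fin.succ_pos i)
        exact ⟨by omega, b _⟩
    have hwd : wd (n + (k + 1)) m = wd (n + (k + 1)) l := by
      have hz : ((n + (k + 1) : ℕ) : ZMod (n + (k + 1))) = 0 := ZMod.natCast_self _
      funext p
      simp only [wd, decide_eq_decide]
      constructor
      · rintro ⟨i, rfl⟩
        induction i using Fin.lastCases with
        | last => exact ⟨0, by rw [hmlast, hl0, hz]; simp⟩
        | cast i => exact ⟨i.succ, by rw [hmne]⟩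
      · rintro ⟨i, rfl⟩
        induction i using Fin.cases with
        | zero => exact ⟨Fin.last k, by rw [hmlast, hl0, hz]; simp⟩
        | succ i => exact ⟨i.castSucc, by rw [hmne]⟩
    have h1 := fB_wd n (k + 1) y m hms hmb
    rw [hwd] at h1
    rw [mul_assoc, h1]
    set x : Fin (k + 1) → ℂ := fun i => (y i)⁻¹ with hx
    set c := y ⟨0, hk⟩ ^ (n + (k + 1)) with hc
    have hc0 : c ≠ 0 := pow_ne_zero _ (hy0 _)
    have h2 : DD x m = (-1) ^ k * DD x (Function.update l 0 (n + (k + 1))) := by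
      have := Matrix.det_permute' (finRotate (k + 1))
        (Matrix.of fun j i : Fin (k + 1) => x j ^ (Function.update l 0 (n + (k + 1)) i))
      rw [sign_finRotate] at this
      simp only [DD]
      simpa [Matrix.submatrix, hm] using this
    have h3 : DD x (Function.update l 0 (n + (k + 1))) = c⁻¹ * DD x l := by
      have e1 : (Matrix.of fun j i : Fin (k + 1) => x j ^ (Function.update l 0 (n + (k + 1)) i)) =
          (Matrix.of fun j i : Fin (k + 1) => x j ^ l i).updateCol 0 (c⁻¹ • fun j => x j ^ l 0) := by
        ext j i
        rw [Matrix.updateCol_apply]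
        by_cases hi : i = 0
        · subst hi
          simp only [Matrix.of_apply, Function.update_self, if_true, hl0, hx, inv_pow, Pi.smul_apply]
          rw [hpow j ⟨0, hk⟩]
          simp [hc]
        · simp [hi]
      rw [DD, e1, Matrix.det_updateCol_smul, DD]
      congr 2
      ext j i
      rw [Matrix.updateCol_apply]
      by_cases hi : i = 0
      · subst hi; simp
      · simp [hi]
    rw [h2, h3, Nat.add_sub_cancel]
    have : ((-1 : ℂ) ^ k) * (-1) ^ k = 1 := by rw [← mul_pow]; simp
    calc _ = (((-1 : ℂ) ^ k) * (-1) ^ k) * (c * c⁻¹) * DD x l := by ring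
      _ = _ := by rw [this, mul_inv_cancel₀ hc0]; ring
  · rw [if_neg h0, one_mul]
    push Not at h0
    exact fB_wd n k y l h fun i => ⟨Nat.one_le_iff_ne_zero.2 (h0 i), b i⟩

theorem DD_zero_of_eq {k : ℕ} (x : Fin k → ℂ) (l : Fin k → ℕ) (i j : Fin k) (hij : i ≠ j)
    (h : l i = l j) : DD x l = 0 :=
  Matrix.det_zero_of_column_eq hij (by simp [h])

theorem DD_zero_of_wrap {k N : ℕ} (x : Fin k → ℂ) (c : ℂ) (hc : ∀ j, x j ^ N = c) (l : Fin k → ℕ)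
    (i j : Fin k) (hij : i ≠ j) (h : l i = 0) (h' : l j = N) : DD x l = 0 := by
  have e1 : (Matrix.of fun j i : Fin k => x j ^ l i) =
      (Matrix.of fun j i : Fin k => x j ^ l i).updateCol j (c • fun j => x j ^ l i) := by
    ext a b
    rw [Matrix.updateCol_apply]
    by_cases hb : b = j
    · subst hb; simp [h, h', hc]
    · simp [hb]
  rw [DD, e1, Matrix.det_updateCol_smul]
  apply mul_eq_zero_of_right
  apply Matrix.det_zero_of_column_eq hij
  intro a
  rw [Matrix.updateCol_apply, Matrix.updateCol_apply]
  simp [hij]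

open Classical in
theorem cycAsc_apply {N : ℕ} [NeZero N] (hN : 3 ≤ N) (q : ℂ) (f : WSp ℂ N) (I : Finset (ZMod N))
    (hI : I.card < N) (w : ZMod N → Bool) :
    (cycProdAsc (uOp ℂ N q) I f) w = if condA w I then
      (if (0 : ZMod N) ∈ I then q else 1) * f (backA w I) else 0 := by
  obtain ⟨L, a, b, d⟩ := asc_list (uOp ℂ N q) I hI
  rw [d, asc_apply hN q f L a, b]

theorem back_card {N : ℕ} [NeZero N] (w : ZMod N → Bool) (I : Finset (ZMod N)) (h : condA w I) :
    (Finset.univ.filter fun p => backA w I p = true).card =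
      (Finset.univ.filter fun p => w p = true).card := by
  set P := Finset.univ.filter fun p => w p = true with hP
  set I1 := I.map (addRightEmbedding (1 : ZMod N)) with hI1
  have hm : ∀ p, p ∈ I1 ↔ p - 1 ∈ I := by
    intro p
    simp only [hI1, Finset.mem_map, addRightEmbedding_apply]
    constructor
    · rintro ⟨a, ha, rfl⟩; simpa
    · intro h; exact ⟨p - 1, h, by ring⟩
  have e : (Finset.univ.filter fun p => backA w I p = true) = I ∪ (P \ I1) := by
    ext p
    simp [backA, hP, hm]
  have hd : Disjoint I (P \ I1) := by
    rw [Finset.disjoint_left]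
    intro p hp hp'
    rw [Finset.mem_sdiff, hm] at hp'
    have h1 := (h p hp).2 hp'.2
    simp [hP, h1] at hp'
  have hs : I1 ⊆ P := by
    intro p hp
    rw [hm] at hp
    have := (h _ hp).1
    simpa [hP] using this
  have hc : I1.card = I.card := Finset.card_map _
  have hle := Finset.card_le_card hs
  rw [e, Finset.card_union_of_disjoint hd, Finset.card_sdiff_of_subset hs]
  omega

theorem fB_zero (n k : ℕ) [NeZero (n + k)] (y : Fin k → ℂ) (w : ZMod (n + k) → Bool)
    (hw : (Finset.univ.filter fun p => w p = true).card ≠ k) : fermiBethe n k y w = 0 := by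
  rw [fB_apply]
  refine Finset.sum_eq_zero fun σ _ => ?_
  rw [if_neg]
  rintro rfl
  apply hw
  have : (Finset.univ.filter fun p => wd (n + k) (fun i => partVal σ i.rev + (i : ℕ) + 1) p = true) =
      Finset.univ.image (fun i : Fin k => ((partVal σ i.rev + (i : ℕ) + 1 : ℕ) : ZMod (n + k))) := by
    ext p
    simp only [wd, Finset.mem_filter, Finset.mem_univ, true_and, decide_eq_true_eq, Finset.mem_image]
    simp only [eq_comm]
  rw [this, Finset.card_image_of_injective, Finset.card_univ, Fintype.card_fin]
  intro i j hij
  have := zcast_inj (pos_bd σ i).1 (pos_bd σ i).2 (pos_bd σ j).1 (pos_bd σ j).2 hij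
  exact (pos_mono σ).injective this

theorem exists_pos {N k : ℕ} [NeZero N] (w : ZMod N → Bool)
    (hw : (Finset.univ.filter fun p => w p = true).card = k) :
    ∃ l : Fin k → ℕ, StrictMono l ∧ (∀ i, 1 ≤ l i ∧ l i ≤ N) ∧ wd N l = w := by
  set Q := (Finset.Icc 1 N).filter fun p : ℕ => w (p : ZMod N) = true with hQ
  have hi : Q.image (fun p : ℕ => (p : ZMod N)) = Finset.univ.filter fun p => w p = true := by
    ext p
    simp only [hQ, Finset.mem_image, Finset.mem_filter, Finset.mem_univ, true_and, Finset.mem_Icc]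
    constructor
    · rintro ⟨a, ⟨_, h⟩, rfl⟩; exact h
    · intro h
      by_cases hp : p = 0
      · exact ⟨N, ⟨⟨NeZero.one_le, le_refl _⟩, by simpa [← hp] using h⟩, by simp [hp]⟩
      · refine ⟨p.val, ⟨⟨?_, (ZMod.val_lt p).le⟩, by simpa using h⟩, by simp⟩
        rw [Nat.one_le_iff_ne_zero]
        simpa using hp
  have hc : Q.card = k := by
    rw [← hw, ← hi, Finset.card_image_of_injOn]
    intro a ha b hb hab
    simp only [hQ, Finset.coe_filter, Finset.mem_Icc, Set.mem_setOf_eq] at ha hb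
    exact zcast_inj ha.1.1 ha.1.2 hb.1.1 hb.1.2 hab
  refine ⟨Q.orderEmbOfFin hc, (Q.orderEmbOfFin hc).strictMono, ?_, ?_⟩
  · intro i
    have := Q.orderEmbOfFin_mem hc i
    simp only [hQ, Finset.mem_filter, Finset.mem_Icc] at this
    exact this.1
  · funext p
    have h1 : (∃ i, p = ((Q.orderEmbOfFin hc i : ℕ) : ZMod N)) ↔ w p = true := by
      have h2 : p ∈ Q.image (fun p : ℕ => (p : ZMod N)) ↔ w p = true := by rw [hi]; simp
      rw [← h2, Finset.mem_image]
      constructor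
      · rintro ⟨i, rfl⟩; exact ⟨_, Q.orderEmbOfFin_mem hc i, rfl⟩
      · rintro ⟨a, ha, rfl⟩
        have : a ∈ Set.range (Q.orderEmbOfFin hc) := by rw [Finset.range_orderEmbOfFin]; exact ha
        obtain ⟨i, rfl⟩ := this
        exact ⟨i, rfl⟩
    simp only [wd, h1]
    cases w p <;> simp

open Classical in
theorem key_S (n k : ℕ) [NeZero (n + k)] (hk : 1 ≤ k) (y : Fin k → ℂ)
    (hy0 : ∀ i, y i ≠ 0) (hpow : ∀ i j, y i ^ (n + k) = y j ^ (n + k))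
    (l : Fin k → ℕ) (h : StrictMono l) (b : ∀ i, 1 ≤ l i ∧ l i ≤ n + k)
    (φ : Fin k ↪ ZMod (n + k)) (hφ : ∀ i, φ i + 1 = (l i : ZMod (n + k))) (S : Finset (Fin k)) :
    (if condA (wd (n + k) l) (S.map φ) then
      (if (0 : ZMod (n + k)) ∈ S.map φ then (-1) ^ (k - 1) * y ⟨0, hk⟩ ^ (n + k) else 1) *
        fermiBethe n k y (backA (wd (n + k) l) (S.map φ)) else 0) * Delta (fun i => (y i)⁻¹) =
      DD (fun i => (y i)⁻¹) (fun i => if i ∈ S then l i - 1 else l i) := by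
  have hφ' : ∀ i, φ i = ((l i - 1 : ℕ) : ZMod (n + k)) := by
    intro i
    have := hφ i
    rw [Nat.cast_sub (b i).1, ← this]; simp
  have hcond : condA (wd (n + k) l) (S.map φ) ↔ ∀ j ∈ S, ∀ i ∉ S, (l i : ZMod (n + k)) ≠ φ j := by
    constructor
    · intro hc j hj i hi e
      have h1 := (hc (φ j) (Finset.mem_map_of_mem φ hj)).2
      have h2 : φ j - 1 ∉ S.map φ := by
        have : φ j - 1 = φ i := by rw [← e, ← hφ i]; ring
        rw [this, Finset.mem_map']; exact hi
      have h3 := h1 h2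
      simp only [wd, decide_eq_false_iff_not] at h3
      exact h3 ⟨i, e.symm⟩
    · intro H p hp
      rw [Finset.mem_map] at hp
      obtain ⟨j, hj, rfl⟩ := hp
      refine ⟨by simp only [wd, decide_eq_true_eq]; exact ⟨j, hφ j⟩, fun h1 => ?_⟩
      simp only [wd, decide_eq_false_iff_not]
      rintro ⟨i, e⟩
      by_cases hi : i ∈ S
      · apply h1
        have : φ j - 1 = φ i := by rw [e, ← hφ i]; ring
        rw [this, Finset.mem_map']; exact hi
      · exact H j hj i hi e.symm
  by_cases hc : condA (wd (n + k) l) (S.map φ)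
  · rw [if_pos hc]
    rw [hcond] at hc
    set m : Fin k → ℕ := fun i => if i ∈ S then l i - 1 else l i with hm
    have hm1 : ∀ i ∈ S, m i = l i - 1 := fun i hi => by simp [hm, hi]
    have hm2 : ∀ i ∉ S, m i = l i := fun i hi => by simp [hm, hi]
    have hms : StrictMono m := by
      intro i j hij
      have h1 := h hij
      have bi := b i
      have bj := b j
      by_cases hi : i ∈ S <;> by_cases hj : j ∈ S
      · rw [hm1 i hi, hm1 j hj]; omega
      · rw [hm1 i hi, hm2 j hj]; omega
      · rw [hm2 i hi, hm1 j hj]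
        have h2 := hc j hj i hi
        rw [hφ' j] at h2
        have : l i ≠ l j - 1 := fun h => h2 (by rw [h])
        omega
      · rw [hm2 i hi, hm2 j hj]; omega
    have hmb : ∀ i, m i ≤ n + k := by
      intro i
      have bi := b i
      by_cases hi : i ∈ S
      · rw [hm1 i hi]; omega
      · rw [hm2 i hi]; omega
    have hz : ∀ i, m i = 0 → i ∈ S ∧ l i = 1 := by
      intro i h0
      have bi := b i
      by_cases hi : i ∈ S
      · rw [hm1 i hi] at h0; exact ⟨hi, by omega⟩
      · rw [hm2 i hi] at h0; omega
    have hmn : ∀ i j, m i = 0 → m j ≠ n + k := by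
      intro i j h0 hn
      obtain ⟨hi, h1⟩ := hz i h0
      have bj := b j
      by_cases hj : j ∈ S
      · rw [hm1 j hj] at hn; omega
      · rw [hm2 j hj] at hn
        apply hc i hi j hj
        rw [hφ', hn, h1, ZMod.natCast_self]; simp
    have h0 : ((0 : ZMod (n + k)) ∈ S.map φ) ↔ ∃ i, m i = 0 := by
      rw [Finset.mem_map]
      constructor
      · rintro ⟨i, hi, e⟩
        refine ⟨i, ?_⟩
        rw [hm1 i hi]
        rw [hφ', ZMod.natCast_eq_zero_iff] at e
        have bi := b i
        exact Nat.eq_zero_of_dvd_of_lt e (by omega)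
      · rintro ⟨i, hi⟩
        obtain ⟨h1, h2⟩ := hz i hi
        exact ⟨i, h1, by rw [hφ', h2]; simp⟩
    have hback : backA (wd (n + k) l) (S.map φ) = wd (n + k) m := by
      funext p
      simp only [backA, wd, decide_eq_decide, decide_eq_true_eq]
      constructor
      · rintro (hp | ⟨⟨i, rfl⟩, hp⟩)
        · obtain ⟨i, hi, rfl⟩ := Finset.mem_map.1 hp
          exact ⟨i, by rw [hm1 i hi, hφ']⟩
        · refine ⟨i, ?_⟩
          rw [← hφ i, add_sub_cancel_right, Finset.mem_map'] at hp
          rw [hm2 i hp]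
      · rintro ⟨i, rfl⟩
        by_cases hi : i ∈ S
        · left
          rw [hm1 i hi, ← hφ', Finset.mem_map']; exact hi
        · right
          rw [hm2 i hi]
          refine ⟨⟨i, rfl⟩, ?_⟩
          rw [← hφ i, add_sub_cancel_right, Finset.mem_map']; exact hi
    rw [hback]
    simp only [h0]
    exact fB_wd_ext n k hk y hy0 hpow m hms hmb hmn
  · rw [if_neg hc, zero_mul]
    symm
    rw [hcond] at hc
    push Not at hc
    obtain ⟨j, hj, i, hi, e⟩ := hc
    have hij : i ≠ j := fun h => hi (h ▸ hj)
    have bi := b i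
    have bj := b j
    by_cases h1 : l j = 1
    · apply DD_zero_of_wrap (N := n + k) _ ((y ⟨0, hk⟩ ^ (n + k))⁻¹) _ _ j i hij.symm
      · simp [hj, h1]
      · simp only [hi, if_false]
        rw [hφ', h1] at e
        refine zcast_inj bi.1 bi.2 NeZero.one_le le_rfl ?_
        rw [e, ZMod.natCast_self]; simp
      · intro a
        rw [inv_pow, hpow a ⟨0, hk⟩]
    · apply DD_zero_of_eq _ _ i j hij
      simp only [hi, hj, if_true, if_false]
      rw [hφ'] at e
      exact zcast_inj bi.1 bi.2 (by omega) (by omega) e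

theorem e_eig (n k : ℕ) (hk : 1 ≤ k) [NeZero (n + k)]
    (hN : 3 ≤ n + k) (y : Fin k → ℂ) (hy0 : ∀ i, y i ≠ 0) (hyd : Function.Injective y)
    (hpow : ∀ i j, y i ^ (n + k) = y j ^ (n + k)) (r : ℕ) (hr : r ≤ n + k - 1) :
    eUInt ℂ (n + k) ((-1) ^ (k - 1) * y ⟨0, hk⟩ ^ (n + k)) (r : ℤ) (fermiBethe n k y) =
      eC y (r : ℤ) • fermiBethe n k y := by
  classical
  set q := (-1) ^ (k - 1) * y ⟨0, hk⟩ ^ (n + k) with hq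
  have hΔ : Delta (fun i => (y i)⁻¹) ≠ 0 := Delta_ne _ (inv_injective.comp hyd)
    (fun i => inv_ne_zero (hy0 i))
  rw [eU_eq q r hr]
  ext w
  rw [LinearMap.sum_apply, Finsupp.finsetSum_apply, Finsupp.smul_apply, smul_eq_mul]
  have e1 : ∀ I ∈ Finset.powersetCard r (Finset.univ : Finset (ZMod (n + k))),
      (cycProdAsc (uOp ℂ (n + k) q) I (fermiBethe n k y)) w = if condA w I then
      (if (0 : ZMod (n + k)) ∈ I then q else 1) * fermiBethe n k y (backA w I) else 0 := by
    intro I hI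
    rw [Finset.mem_powersetCard] at hI
    rw [cycAsc_apply hN q _ I (by omega) w]
  rw [Finset.sum_congr rfl e1]
  by_cases hw : (Finset.univ.filter fun p => w p = true).card = k
  · obtain ⟨l, h, b, rfl⟩ := exists_pos w hw
    let φ : Fin k ↪ ZMod (n + k) := ⟨fun i => (l i : ZMod (n + k)) - 1, by
      intro i j hij
      have := sub_left_injective hij
      exact h.injective (zcast_inj (b i).1 (b i).2 (b j).1 (b j).2 this)⟩
    have hφ : ∀ i, φ i + 1 = (l i : ZMod (n + k)) := fun i => sub_add_cancel _ _
    have e2 : Finset.powersetCard r (Finset.univ.map φ) ⊆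
        Finset.powersetCard r (Finset.univ : Finset (ZMod (n + k))) :=
      Finset.powersetCard_mono (Finset.subset_univ _)
    rw [← Finset.sum_subset e2]
    · rw [Finset.powersetCard_map, Finset.sum_map]
      apply mul_right_cancel₀ hΔ
      rw [mul_assoc, fB_wd n k y l h b, Finset.sum_mul,
        ← DD_sum (fun i => (y i)⁻¹) y (fun i => inv_mul_cancel₀ (hy0 i)) l (fun i => (b i).1) r]
      refine Finset.sum_congr rfl fun S _ => ?_
      exact key_S n k hk y hy0 hpow l h b φ hφ S
    · intro I hI hI'
      rw [if_neg]
      intro hc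
      apply hI'
      rw [Finset.mem_powersetCard] at hI ⊢
      refine ⟨?_, hI.2⟩
      intro p hp
      have := (hc p hp).1
      simp only [wd, decide_eq_true_eq] at this
      obtain ⟨i, hi⟩ := this
      rw [Finset.mem_map]
      exact ⟨i, Finset.mem_univ _, by rw [← hφ i] at hi; exact (add_right_cancel hi).symm⟩
  · rw [fB_zero n k y w hw, mul_zero]
    refine Finset.sum_eq_zero fun I _ => ?_
    split_ifs with hc
    all_goals first
      | rfl
      | rw [fB_zero n k y _ (by rw [back_card w I hc]; exact hw), mul_zero]

theorem h_eig (n k : ℕ) (hk : 1 ≤ k) [NeZero (n + k)]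
    (hN : 3 ≤ n + k) (y : Fin k → ℂ) (hy0 : ∀ i, y i ≠ 0) (hyd : Function.Injective y)
    (hpow : ∀ i j, y i ^ (n + k) = y j ^ (n + k)) (r : ℕ) (hr : r ≤ n + k - 1) :
    hUOp ℂ (n + k) ((-1) ^ (k - 1) * y ⟨0, hk⟩ ^ (n + k)) r (fermiBethe n k y) =
      hC y (r : ℤ) • fermiBethe n k y := by
  induction r using Nat.strong_induction_on with
  | _ r ih =>
  have ee := e_eig n k hk hN y hy0 hyd hpow
  set q := (-1) ^ (k - 1) * y ⟨0, hk⟩ ^ (n + k) with hq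
  rcases Nat.eq_zero_or_pos r with rfl | hr0
  · simp [hUOp, (cyc_empty q).2, hC_zero]
  · have h1 := congrArg (fun T : Module.End ℂ (WSp ℂ (n + k)) => T (fermiBethe n k y))
      (nc_identity2 hN q r hr0 hr)
    have h2 := eh_identity y r hr0
    obtain ⟨s, rfl⟩ : ∃ s, r = s + 1 := ⟨r - 1, by omega⟩
    simp only [LinearMap.sum_apply, LinearMap.smul_apply, Module.End.mul_apply,
      LinearMap.zero_apply] at h1
    rw [Finset.Nat.sum_antidiagonal_succ] at h1 h2
    have e0 : eUInt ℂ (n + k) q ((0 : ℕ) : ℤ) = 1 := by simp [eUInt]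
    have e0' : eC y ((0 : ℕ) : ℤ) = 1 := by simp [eC]
    simp only [e0, e0', pow_zero, one_smul, one_mul, Module.End.one_apply] at h1 h2
    have h3 : ∀ p ∈ Finset.HasAntidiagonal.antidiagonal s,
        ((-1 : ℂ) ^ (p.1 + 1)) • (eUInt ℂ (n + k) q ((p.1 + 1 : ℕ) : ℤ))
          (hUOp ℂ (n + k) q p.2 (fermiBethe n k y)) =
        ((-1 : ℂ) ^ (p.1 + 1) * (eC y ((p.1 + 1 : ℕ) : ℤ) * hC y (p.2 : ℤ))) • fermiBethe n k y := by
      rintro ⟨a, c⟩ hp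
      rw [Finset.HasAntidiagonal.mem_antidiagonal] at hp
      simp only at hp ⊢
      rw [ih c (by omega) (by omega), map_smul, ee (a + 1) (by omega), smul_smul, smul_smul]
      congr 1; ring
    rw [Finset.sum_congr rfl h3, ← Finset.sum_smul] at h1
    rw [eq_neg_of_add_eq_zero_left h1, ← neg_smul, eq_neg_of_add_eq_zero_left h2]

/-- Let `y ∈ ℂ^k` have nonzero, pairwise distinct entries with
`y_1^N = ⋯ = y_k^N`, and set `q = (-1)^{k-1} y_1^N`.  Then the vector `b̃(y)` is a
simultaneous eigenvector of the noncommutative elementary and complete symmetric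
polynomials in the affine nil-Temperley–Lieb generators:
`e_r(𝒰) b̃(y) = e_r(y) b̃(y)` and `h_r(𝒰) b̃(y) = h_r(y) b̃(y)` for `1 ≤ r ≤ N-1`. -/
theorem fermi_bethe_eigenvector (n k : ℕ) (hn : 1 ≤ n) (hk : 1 ≤ k) [NeZero (n + k)]
    (hN : 3 ≤ n + k) (y : Fin k → ℂ) (hy0 : ∀ i, y i ≠ 0) (hyd : Function.Injective y)
    (hpow : ∀ i j, y i ^ (n + k) = y j ^ (n + k)) :
    ∀ r : ℕ, 1 ≤ r → r ≤ n + k - 1 →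
      eUInt ℂ (n + k) ((-1) ^ (k - 1) * y ⟨0, hk⟩ ^ (n + k)) (r : ℤ) (fermiBethe n k y) =
          eC y (r : ℤ) • fermiBethe n k y ∧
      hUOp ℂ (n + k) ((-1) ^ (k - 1) * y ⟨0, hk⟩ ^ (n + k)) r (fermiBethe n k y) =
          hC y (r : ℤ) • fermiBethe n k y := by
  intro r _ hr
  exact ⟨e_eig n k hk hN y hy0 hyd hpow r hr, h_eig n k hk hN y hy0 hyd hpow r hr⟩
end
end
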